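/- arXiv:math/0211058 — 11 statements merged into one kernel-verified Lean document; each statement's English description precedes it below -/
import Mathlib

section
/- Under these hypotheses, the A-modules A^∨ = Hom_k(A,k) and J are both free of rank one, and the map θ0 : A^∨ → Hom_A(J, A), sending φ to the restriction to J of the map 1⊗φ : A ⊗[k] A → A given by a⊗b ↦ φ(b)·a (this restriction is A-linear and takes values in A ≅ A⊗k), is an A-linear isomorphism. -/
open TensorProduct

noncomputable section

variable (k A : Type*) [CommRing k] [CommRing A] [Algebra k A]

/-- `I`, the kernel of the multiplication map `μ : A ⊗[k] A → A`, as an ideal of `A ⊗[k] A`. -/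
def Imul : Ideal (A ⊗[k] A) := RingHom.ker (Algebra.TensorProduct.lmul' k (S := A))

/-- `J = Ann_{A ⊗[k] A}(I)`, the annihilator of `I`.  Via the instance
`Algebra A (A ⊗[k] A)` given by `a ↦ a ⊗ 1`, the ideal `J` is an `A`-module. -/
def Jann : Ideal (A ⊗[k] A) := Submodule.annihilator (Imul k A)

/-- The `k`-linear map `1 ⊗ φ : A ⊗[k] A → A`, `a ⊗ b ↦ φ(b)·a`. -/
def oneTensorMap (φ : Module.Dual k A) : A ⊗[k] A →ₗ[k] A :=
  TensorProduct.lift (LinearMap.flip ((LinearMap.lsmul k A).comp φ))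

/-- The `A`-module structure on `A^∨ = Hom_k(A,k)` given by `(a·φ)(b) = φ(ab)`. -/
instance dualSMul : SMul A (Module.Dual k A) :=
  ⟨fun a φ => φ.comp (LinearMap.mulLeft k a)⟩

theorem dual_smul_apply (a : A) (φ : Module.Dual k A) (b : A) : (a • φ) b = φ (a * b) := rfl

instance dualModule : Module A (Module.Dual k A) where
  one_smul φ := LinearMap.ext fun b => by rw [dual_smul_apply, one_mul]
  mul_smul a a' φ := LinearMap.ext fun b => by
    rw [dual_smul_apply, dual_smul_apply, dual_smul_apply]; congr 1; ring
  smul_zero a := LinearMap.ext fun b => by rw [dual_smul_apply]; rfl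
  smul_add a φ ψ := LinearMap.ext fun b => by
    simp only [LinearMap.add_apply, dual_smul_apply]
  add_smul a a' φ := LinearMap.ext fun b => by
    simp only [LinearMap.add_apply, dual_smul_apply, add_mul, map_add]
  zero_smul φ := LinearMap.ext fun b => by
    rw [dual_smul_apply, zero_mul, map_zero]; rfl

section helpers

variable {k A}

lemma oneTensor_tmul (φ : Module.Dual k A) (a b : A) :
    oneTensorMap k A φ (a ⊗ₜ b) = φ b • a := by
  simp [oneTensorMap]

lemma oneTensor_smul (φ : Module.Dual k A) (a : A) (z : A ⊗[k] A) :
    oneTensorMap k A φ (a • z) = a * oneTensorMap k A φ z := by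
  induction z using TensorProduct.induction_on with
  | zero => simp
  | tmul x y => simp [TensorProduct.smul_tmul', oneTensor_tmul]
  | add x y hx hy => rw [smul_add, map_add, map_add, hx, hy, mul_add]

/-- The map `1 ⊗ φ` as an `A`-linear map. -/
def oneTensorA (φ : Module.Dual k A) : A ⊗[k] A →ₗ[A] A where
  toFun := oneTensorMap k A φ
  map_add' := map_add _
  map_smul' a z := oneTensor_smul φ a z

lemma oneTensor_add (φ ψ : Module.Dual k A) (z : A ⊗[k] A) :
    oneTensorMap k A (φ + ψ) z = oneTensorMap k A φ z + oneTensorMap k A ψ z := by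
  induction z using TensorProduct.induction_on with
  | zero => simp
  | tmul x y => simp [oneTensor_tmul, add_smul]
  | add x y hx hy => simp only [map_add, hx, hy]; ring

lemma oneTensor_sum {ι : Type*} (s : Finset ι) (φ : ι → Module.Dual k A) (z : A ⊗[k] A) :
    oneTensorMap k A (∑ i ∈ s, φ i) z = ∑ i ∈ s, oneTensorMap k A (φ i) z := by
  classical
  induction s using Finset.induction_on with
  | empty =>
    simp only [Finset.sum_empty]
    induction z using TensorProduct.induction_on with
    | zero => simp
    | tmul x y => simp [oneTensor_tmul]
    | add x y hx hy => simp only [map_add, hx, hy, add_zero]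
  | insert a s ha ih => rw [Finset.sum_insert ha, Finset.sum_insert ha, oneTensor_add, ih]

lemma oneTensor_dual_smul (φ : Module.Dual k A) (a : A) (z : A ⊗[k] A) :
    oneTensorMap k A (a • φ) z = oneTensorMap k A φ ((1 ⊗ₜ[k] a) * z) := by
  induction z using TensorProduct.induction_on with
  | zero => simp
  | tmul x y => simp [oneTensor_tmul, dual_smul_apply]
  | add x y hx hy => simp only [mul_add, map_add, hx, hy]

lemma J_mul_eq {x : A ⊗[k] A} (hx : x ∈ Jann k A) (w : A ⊗[k] A) :
    w * x = (Algebra.TensorProduct.lmul' k (S := A) w) • x := by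
  have h1 : w - (Algebra.TensorProduct.lmul' k (S := A) w) ⊗ₜ[k] (1 : A) ∈ Imul k A := by
    simp [Imul, RingHom.mem_ker]
  have h2 := Submodule.mem_annihilator.1 hx _ h1
  rw [smul_eq_mul, mul_sub, sub_eq_zero] at h2
  rw [Algebra.smul_def, mul_comm w, h2, mul_comm]
  rfl

lemma J_tmul {x : A ⊗[k] A} (hx : x ∈ Jann k A) (a : A) :
    (1 ⊗ₜ[k] a) * x = a • x := by
  rw [J_mul_eq hx]; simp

lemma exists_dual [Module.Finite k A] [Module.Projective k A] :
    ∃ (n : ℕ) (e : Fin n → A) (e' : Fin n → Module.Dual k A),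
      ∀ y, ∑ i, e' i y • e i = y := by
  obtain ⟨n, f, g, -, -, hfg⟩ := Module.Finite.exists_comp_eq_id_of_projective k A
  refine ⟨n, fun i => f (Pi.single i 1), fun i => LinearMap.proj i ∘ₗ g, fun y => ?_⟩
  have h : f (g y) = y := LinearMap.congr_fun hfg y
  conv_rhs => rw [← h, pi_eq_sum_univ' (g y), map_sum]
  refine Finset.sum_congr rfl fun i _ => ?_
  rw [map_smul]
  simp only [LinearMap.comp_apply, LinearMap.proj_apply]

lemma exists_s [Module.Projective k A] (δ : A ⊗[k] A) (hδ : Imul k A = Ideal.span {δ}) :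
    ∃ s : A ⊗[k] A →ₗ[A] A ⊗[k] A,
      (∀ z, δ * s z = z - (Algebra.TensorProduct.lmul' k (S := A) z) ⊗ₜ[k] (1 : A)) ∧
      ∀ a : A, s (a ⊗ₜ 1) = 0 := by
  let IA : Submodule A (A ⊗[k] A) := (Imul k A).restrictScalars A
  let f : A ⊗[k] A →ₗ[A] IA := LinearMap.codRestrict IA (LinearMap.mulLeft A δ) (fun c => by
    change δ * c ∈ Imul k A
    rw [hδ]
    exact Ideal.mul_mem_right _ _ (Ideal.mem_span_singleton_self δ))
  have hf : Function.Surjective f := by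
    rintro ⟨y, hy⟩
    have hy' : y ∈ Imul k A := hy
    rw [hδ, Ideal.mem_span_singleton'] at hy'
    obtain ⟨c, hc⟩ := hy'
    exact ⟨c, Subtype.ext ((mul_comm δ c).trans hc)⟩
  let p0 : A ⊗[k] A →ₗ[A] A ⊗[k] A := LinearMap.id -
    (Algebra.linearMap A (A ⊗[k] A)) ∘ₗ (Algebra.TensorProduct.lmul'' k (S := A)).toLinearMap
  have hp0 : ∀ z, p0 z = z - (Algebra.TensorProduct.lmul' k (S := A) z) ⊗ₜ[k] (1 : A) :=
    fun z => rfl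
  let p : A ⊗[k] A →ₗ[A] IA := LinearMap.codRestrict IA p0 (fun c => by
    change p0 c ∈ Imul k A
    rw [hp0]
    simp [Imul, RingHom.mem_ker])
  obtain ⟨s0, hs0⟩ := Module.projective_lifting_property f p hf
  have h0 : ∀ z, δ * s0 z = p0 z := fun z => congrArg Subtype.val (LinearMap.congr_fun hs0 z)
  refine ⟨s0 ∘ₗ p0, fun z => ?_, fun a => ?_⟩
  · rw [LinearMap.comp_apply, h0, hp0 (p0 z), hp0 z]
    simp
  · rw [LinearMap.comp_apply, hp0]
    simp

lemma trace_identity {n : ℕ} (e : Fin n → A) (e' : Fin n → Module.Dual k A)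
    (he : ∀ y, ∑ i, e' i y • e i = y) (G : A ⊗[k] A →ₗ[A] A) (z : A ⊗[k] A) :
    ∑ i, e' i (G (z * (1 ⊗ₜ e i))) =
      ∑ i, e' i (Algebra.TensorProduct.lmul' k (S := A) z * G (1 ⊗ₜ e i)) := by
  have hG : ∀ x y : A, G (x ⊗ₜ y) = x * G (1 ⊗ₜ y) := fun x y => by
    rw [← smul_eq_mul, ← map_smul, TensorProduct.smul_tmul']; simp
  induction z using TensorProduct.induction_on with
  | zero => simp
  | add x y hx hy => simp only [add_mul, map_add, Finset.sum_add_distrib, hx, hy]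
  | tmul x y =>
    have h1 : ∀ i, e' i (G (x ⊗ₜ y * (1 ⊗ₜ e i))) =
        ∑ l, e' l (y * e i) * e' i (x * G (1 ⊗ₜ e l)) := fun i => by
      rw [Algebra.TensorProduct.tmul_mul_tmul, mul_one]
      conv_lhs => rw [← he (y * e i)]
      rw [TensorProduct.tmul_sum, map_sum, map_sum]
      refine Finset.sum_congr rfl fun l _ => ?_
      rw [← TensorProduct.smul_tmul, hG, smul_mul_assoc, map_smul, smul_eq_mul]
    simp only [h1]
    rw [Finset.sum_comm]
    refine Finset.sum_congr rfl fun l _ => ?_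
    rw [Algebra.TensorProduct.lmul'_apply_tmul]
    have : x * y * G (1 ⊗ₜ e l) = y * (x * G (1 ⊗ₜ e l)) := by ring
    rw [this]
    conv_rhs => rw [← he (x * G (1 ⊗ₜ e l))]
    rw [Finset.mul_sum, map_sum]
    refine Finset.sum_congr rfl fun i _ => ?_
    rw [mul_smul_comm, map_smul, smul_eq_mul, mul_comm]

/-- The map `θ0`. -/
def thetaZero : Module.Dual k A →ₗ[A] (↥(Jann k A) →ₗ[A] A) where
  toFun φ := (oneTensorA φ) ∘ₗ ((Jann k A).restrictScalars A).subtype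
  map_add' φ ψ := LinearMap.ext fun x => oneTensor_add φ ψ x
  map_smul' a φ := LinearMap.ext fun x => by
    change oneTensorMap k A (a • φ) (x : A ⊗[k] A) = a * oneTensorMap k A φ (x : A ⊗[k] A)
    rw [oneTensor_dual_smul, J_tmul x.2, oneTensor_smul]

lemma thetaZero_apply (φ : Module.Dual k A) (x : Jann k A) :
    thetaZero φ x = oneTensorMap k A φ (x : A ⊗[k] A) := rfl

lemma mem_J {δ : A ⊗[k] A} (hδ : Imul k A = Ideal.span {δ}) {z : A ⊗[k] A} :
    z ∈ Jann k A ↔ δ * z = 0 := by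
  rw [Jann, hδ, Ideal.span, Submodule.mem_annihilator_span_singleton, smul_eq_mul, mul_comm]

lemma thetaZero_bijective [Module.Finite k A] [Module.Projective k A]
    (δ : A ⊗[k] A) (hδ : Imul k A = Ideal.span {δ}) :
    Function.Bijective (thetaZero (k := k) (A := A)) := by
  obtain ⟨s, hs, -⟩ := exists_s δ hδ
  obtain ⟨n, e, e', he⟩ := exists_dual (k := k) (A := A)
  have hδ0 : Algebra.TensorProduct.lmul' k (S := A) δ = 0 := by
    have : δ ∈ Imul k A := hδ ▸ Ideal.mem_span_singleton_self δ
    exact this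
  have hsd : ∀ z, δ * s (δ * z) = δ * z := fun z => by rw [hs]; simp [hδ0]
  constructor
  · rw [injective_iff_map_eq_zero]
    intro φ hφ
    have hφJ : ∀ x ∈ Jann k A, oneTensorA φ x = 0 := fun x hx =>
      LinearMap.congr_fun hφ ⟨x, hx⟩
    let G : A ⊗[k] A →ₗ[A] A := oneTensorA φ ∘ₗ s
    have hG : ∀ z, G (δ * z) = oneTensorA φ z := fun z => by
      have := hφJ (s (δ * z) - z) ((mem_J hδ).2 (by rw [mul_sub, hsd, sub_self]))
      rw [map_sub, sub_eq_zero] at this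
      exact this
    refine LinearMap.ext fun b => ?_
    have h1 := trace_identity e e' he G (b • δ)
    have h2 : Algebra.TensorProduct.lmul' k (S := A) (b • δ) = 0 := by
      rw [Algebra.smul_def, map_mul, hδ0, mul_zero]
    rw [h2] at h1
    simp only [zero_mul, map_zero, Finset.sum_const_zero] at h1
    rw [LinearMap.zero_apply, ← h1]
    conv_lhs => rw [← he b]
    rw [map_sum]
    refine Finset.sum_congr rfl fun i _ => ?_
    rw [smul_mul_assoc, G.map_smul b, hG]
    change _ = e' i (b • oneTensorMap k A φ (1 ⊗ₜ e i))
    rw [oneTensor_tmul, map_smul, smul_eq_mul, smul_eq_mul, mul_comm, mul_smul_comm, mul_one, map_smul, smul_eq_mul]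
  · intro f
    let q0 : A ⊗[k] A →ₗ[A] A ⊗[k] A := LinearMap.id - s ∘ₗ LinearMap.mulLeft A δ
    have hq0 : ∀ z, q0 z = z - s (δ * z) := fun z => rfl
    let q : A ⊗[k] A →ₗ[A] ((Jann k A).restrictScalars A) :=
      LinearMap.codRestrict _ q0 (fun z => (mem_J hδ).2 (by rw [hq0, mul_sub, hsd, sub_self]))
    let F : A ⊗[k] A →ₗ[A] A := f ∘ₗ q
    have hF : ∀ x : Jann k A, F x = f x := fun x => by
      change f (q x) = f x
      congr 1
      apply Subtype.ext
      change q0 x = x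
      rw [hq0, (mem_J hδ).1 x.2, map_zero, sub_zero]
    refine ⟨∑ i, F (1 ⊗ₜ e i) • e' i, LinearMap.ext fun x => ?_⟩
    rw [thetaZero_apply, oneTensor_sum, ← hF]
    have h1 : ∀ i, oneTensorMap k A (F (1 ⊗ₜ e i) • e' i) (x : A ⊗[k] A) =
        F (1 ⊗ₜ e i) * oneTensorMap k A (e' i) (x : A ⊗[k] A) := fun i => by
      rw [oneTensor_dual_smul, J_tmul x.2, oneTensor_smul]
    simp only [h1]
    generalize (x : A ⊗[k] A) = z
    induction z using TensorProduct.induction_on with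
    | zero => simp
    | add x y hx hy => simp only [map_add, mul_add, Finset.sum_add_distrib, hx, hy]
    | tmul a b =>
      have hG : F (a ⊗ₜ b) = a * F (1 ⊗ₜ b) := by
        rw [← smul_eq_mul, ← map_smul, TensorProduct.smul_tmul']; simp
      rw [hG]
      conv_rhs => rw [← he b]
      rw [TensorProduct.tmul_sum, map_sum, Finset.mul_sum]
      refine Finset.sum_congr rfl fun i _ => ?_
      have h3 : (1 : A) ⊗ₜ[k] (e' i b • e i) = (algebraMap k A (e' i b)) • ((1 : A) ⊗ₜ[k] e i) := by
        rw [algebraMap_smul, TensorProduct.tmul_smul]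
      rw [oneTensor_tmul, h3, map_smul, smul_eq_mul, Algebra.smul_def]
      ring

lemma J_free [Module.Finite k A] [Module.Projective k A]
    (δ : A ⊗[k] A) (hδ : Imul k A = Ideal.span {δ})
    (ε : A ⊗[k] A) (hε : Jann k A = Ideal.span {ε}) :
    Nonempty (↥(Jann k A) ≃ₗ[A] A) := by
  obtain ⟨s, hs, hs1⟩ := exists_s δ hδ
  have hεJ : ε ∈ Jann k A := hε ▸ Ideal.mem_span_singleton_self ε
  have hδ0 : Algebra.TensorProduct.lmul' k (S := A) δ = 0 := by
    have : δ ∈ Imul k A := hδ ▸ Ideal.mem_span_singleton_self δ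
    exact this
  have hsd : ∀ z, δ * s (δ * z) = δ * z := fun z => by rw [hs]; simp [hδ0]
  have hgen : ∀ x ∈ Jann k A, ∃ a : A, a • ε = x := fun x hx => by
    rw [hε, Ideal.mem_span_singleton'] at hx
    obtain ⟨c, hc⟩ := hx
    exact ⟨_, by rw [← hc, J_mul_eq hεJ]⟩
  let h : A ⊗[k] A →ₗ[A] A ⊗[k] A := s +
    (LinearMap.toSpanSingleton A _ ε) ∘ₗ (Algebra.TensorProduct.lmul'' k (S := A)).toLinearMap
  have hh : ∀ z, h z = s z + (Algebra.TensorProduct.lmul' k (S := A) z) • ε := fun z => rfl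
  have hsurj : Function.Surjective h := fun w => by
    obtain ⟨a, ha⟩ := hgen (w - s (δ * w)) ((mem_J hδ).2 (by rw [mul_sub, hsd, sub_self]))
    refine ⟨δ * w + a ⊗ₜ 1, ?_⟩
    rw [hh, map_add, hs1, map_add, map_mul (Algebra.TensorProduct.lmul' k (S := A)), hδ0]
    simp [ha]
  have hinj := OrzechProperty.injective_of_surjective_endomorphism h hsurj
  let g : A →ₗ[A] ((Jann k A).restrictScalars A) :=
    LinearMap.toSpanSingleton A _ ⟨ε, hεJ⟩
  have hg : ∀ a, ((g a : (Jann k A).restrictScalars A) : A ⊗[k] A) = a • ε := fun a => rfl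
  have hb : Function.Bijective g := by
    constructor
    · rw [injective_iff_map_eq_zero]
      intro a ha
      have h1 : a • ε = 0 := by rw [← hg, ha]; rfl
      have h2 : h (a ⊗ₜ 1) = h 0 := by rw [hh, hs1, map_zero]; simp [h1]
      have h3 := congrArg (Algebra.TensorProduct.lmul' k (S := A)) (hinj h2)
      simpa using h3
    · intro x
      obtain ⟨a, ha⟩ := hgen x x.2
      exact ⟨a, Subtype.ext ha⟩
  exact ⟨(LinearEquiv.ofBijective g hb).symm⟩

end helpers

/-- Let `k` be a commutative ring and `A` a commutative `k`-algebra which, as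
a `k`-module, is finitely generated projective of constant rank `r`.  Assume the ideals
`I = ker(μ : A ⊗[k] A → A)` and `J = Ann_{A⊗[k]A}(I)` are principal.  Then the `A`-modules
`A^∨ = Hom_k(A,k)` and `J` are both free of rank one, and the map `θ0 : A^∨ → Hom_A(J, A)`,
sending `φ` to the restriction to `J` of `1 ⊗ φ : A ⊗[k] A → A` (`a ⊗ b ↦ φ(b)·a`), is an
`A`-linear isomorphism. -/
theorem stmt0 (r : ℕ) [Module.Finite k A] [Module.Projective k A]
    (hrank : ∀ (p : Ideal k) [p.IsPrime],
      Nonempty (LocalizedModule p.primeCompl A ≃ₗ[Localization p.primeCompl]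
        (Fin r → Localization p.primeCompl)))
    (hI : (Imul k A).IsPrincipal) (hJ : (Jann k A).IsPrincipal) :
    Nonempty (Module.Dual k A ≃ₗ[A] A) ∧
      Nonempty (↥(Jann k A) ≃ₗ[A] A) ∧
      ∃ Θ : Module.Dual k A ≃ₗ[A] (↥(Jann k A) →ₗ[A] A),
        ∀ (φ : Module.Dual k A) (x : ↥(Jann k A)),
          Θ φ x = oneTensorMap k A φ (x : A ⊗[k] A) := by
  obtain ⟨δ, hδ⟩ := hI
  obtain ⟨ε, hε⟩ := hJ
  obtain ⟨j⟩ := J_free δ hδ ε hε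
  let Θ := LinearEquiv.ofBijective thetaZero (thetaZero_bijective δ hδ)
  exact ⟨⟨Θ ≪≫ₗ (LinearEquiv.congrLeft A A j) ≪≫ₗ LinearMap.ringLmapEquivSelf A A A⟩, ⟨j⟩,
    Θ, fun φ x => rfl⟩

end
end

section
/- Under these hypotheses, the A-modules I and B = (A ⊗[k] A)/J are finitely generated projective of constant rank r−1, and J is a free A-module of rank one. -/
open TensorProduct

noncomputable section

variable (k A : Type*) [CommRing k] [CommRing A] [Algebra k A]

theorem split_aux {R M N P : Type*} [CommRing R] [AddCommGroup M] [AddCommGroup N]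
    [AddCommGroup P] [Module R M] [Module R N] [Module R P] (f : M →ₗ[R] N) (g : N →ₗ[R] P)
    (h : Function.Exact f g) (hf : Function.Injective f) (hg : Function.Surjective g)
    [Module.Projective R P] : Nonempty (N ≃ₗ[R] M × P) := by
  obtain ⟨l, hl⟩ := Module.projective_lifting_property g LinearMap.id hg
  exact ⟨(h.splitSurjectiveEquiv hf ⟨l, hl⟩).1⟩

theorem free_aux {R M : Type*} [CommRing R] [AddCommGroup M] [Module R M]
    [Module.Finite R M] [Module.Projective R M] (q : Ideal R) [hq : q.IsPrime] (n : ℕ)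
    (h : Module.rankAtStalk (R := R) M ⟨q, hq⟩ = n) :
    Nonempty (LocalizedModule q.primeCompl M ≃ₗ[Localization q.primeCompl]
            (Fin n → Localization q.primeCompl)) := by
  have : IsLocalRing (Localization q.primeCompl) :=
    inferInstanceAs (IsLocalRing (Localization.AtPrime q))
  have : Nontrivial (Localization q.primeCompl) :=
    inferInstanceAs (Nontrivial (Localization.AtPrime q))
  have : Module.Free (Localization q.primeCompl) (LocalizedModule q.primeCompl M) :=
    Module.free_of_flat_of_isLocalRing
  exact ⟨(Module.finBasisOfFinrankEq (Localization q.primeCompl)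
    (LocalizedModule q.primeCompl M) h).equivFun⟩

theorem free_rank_aux {R M : Type*} [CommRing R] [AddCommGroup M] [Module R M]
    (q : Ideal R) [hq : q.IsPrime] (n : ℕ)
    (h : Nonempty (LocalizedModule q.primeCompl M ≃ₗ[Localization q.primeCompl]
            (Fin n → Localization q.primeCompl))) :
    Module.rankAtStalk (R := R) M ⟨q, hq⟩ = n := by
  have : Nontrivial (Localization q.primeCompl) :=
    inferInstanceAs (Nontrivial (Localization.AtPrime q))
  obtain ⟨e⟩ := h
  exact e.finrank_eq.trans (Module.finrank_fin_fun _)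

/-- Let `k` be a commutative ring and `A` a commutative `k`-algebra which, as
a `k`-module, is finitely generated projective of constant rank `r`.  Assume the ideals
`I = ker(μ)` and `J = Ann(I)` of `A ⊗[k] A` are principal.  Then the `A`-modules `I` and
`B = (A ⊗[k] A)/J` are finitely generated projective of constant rank `r − 1`, and `J` is a
free `A`-module of rank one. -/
theorem stmt2 (r : ℕ) [Module.Finite k A] [Module.Projective k A]
    (hrank : ∀ (p : Ideal k) [p.IsPrime],
      Nonempty (LocalizedModule p.primeCompl A ≃ₗ[Localization p.primeCompl]
        (Fin r → Localization p.primeCompl)))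
    (hI : (Imul k A).IsPrincipal) (hJ : (Jann k A).IsPrincipal) :
    (Module.Finite A ↥(Imul k A) ∧ Module.Projective A ↥(Imul k A) ∧
        ∀ (q : Ideal A) [q.IsPrime],
          Nonempty (LocalizedModule q.primeCompl ↥(Imul k A) ≃ₗ[Localization q.primeCompl]
            (Fin (r - 1) → Localization q.primeCompl))) ∧
      (Module.Finite A ((A ⊗[k] A) ⧸ (Jann k A)) ∧
          Module.Projective A ((A ⊗[k] A) ⧸ (Jann k A)) ∧
          ∀ (q : Ideal A) [q.IsPrime],
            Nonempty (LocalizedModule q.primeCompl ((A ⊗[k] A) ⧸ (Jann k A))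
              ≃ₗ[Localization q.primeCompl] (Fin (r - 1) → Localization q.primeCompl))) ∧
      Nonempty (↥(Jann k A) ≃ₗ[A] A) := by
  let g : A ⊗[k] A →ₗ[A] A := (Algebra.TensorProduct.lmul'' k (S := A)).toLinearMap
  have hgI : ∀ x, g x = 0 ↔ x ∈ Imul k A := fun x => Iff.rfl
  have hg1 : ∀ a : A, g (a ⊗ₜ 1) = a := fun a => by
    simp [g, Algebra.TensorProduct.lmul'']
  have hg : Function.Surjective g := fun a => ⟨a ⊗ₜ 1, hg1 a⟩
  let i : ↥(Imul k A) →ₗ[A] A ⊗[k] A := (Submodule.subtype (Imul k A)).restrictScalars A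
  have hi : Function.Injective i := Subtype.val_injective
  have hex : Function.Exact i g := fun x => by
    rw [hgI]
    exact ⟨fun h => ⟨⟨x, h⟩, rfl⟩, fun ⟨y, hy⟩ => hy ▸ y.2⟩
  obtain ⟨e1⟩ := split_aux i g hex hi hg
  have hIproj : Module.Projective A ↥(Imul k A) :=
    Module.Projective.of_split (e1.symm.toLinearMap ∘ₗ LinearMap.inl A _ _)
      (LinearMap.fst A _ _ ∘ₗ e1.toLinearMap) (by ext x; simp)
  have hIfin : Module.Finite A ↥(Imul k A) :=
    Module.Finite.of_surjective (LinearMap.fst A _ _ ∘ₗ e1.toLinearMap)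
      (Prod.fst_surjective.comp e1.surjective)
  have hIrank : ∀ (q : Ideal A) [hq : q.IsPrime],
      Module.rankAtStalk (R := A) ↥(Imul k A) ⟨q, hq⟩ = r - 1 := by
    intro q hq
    have : Nontrivial A := ⟨0, 1, fun h => hq.ne_top ((Ideal.eq_top_iff_one q).2 (h ▸ q.zero_mem))⟩
    have h1 := congrFun (Module.rankAtStalk_eq_of_equiv e1) ⟨q, hq⟩
    rw [Module.rankAtStalk_prod, Module.rankAtStalk_baseChange, Pi.add_apply,
      Module.rankAtStalk_self] at h1
    have h2 := free_rank_aux (M := A) _ r (hrank (q.comap (algebraMap k A)))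
    have h3 : r = Module.rankAtStalk (R := A) ↥(Imul k A) ⟨q, hq⟩ + 1 := h2.symm.trans h1
    omega
  -- B ≃ I
  obtain ⟨u, hu⟩ := hI
  have huI : u ∈ Imul k A := by rw [hu]; exact Submodule.mem_span_singleton_self u
  let m : A ⊗[k] A →ₗ[A ⊗[k] A] ↥(Imul k A) := LinearMap.toSpanSingleton _ _ ⟨u, huI⟩
  have hm : Function.Surjective m := by
    rintro ⟨x, hx⟩
    have hx' := hx
    rw [hu, Submodule.mem_span_singleton] at hx'
    obtain ⟨a, rfl⟩ := hx'
    exact ⟨a, Subtype.ext rfl⟩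
  have hker : LinearMap.ker m = Jann k A := by
    ext x
    have h1 : x ∈ Jann k A ↔ x • u = 0 := by
      rw [Jann, hu, Submodule.mem_annihilator_span_singleton]
    rw [h1, LinearMap.mem_ker, ← Subtype.coe_inj]
    rfl
  let eB' : ((A ⊗[k] A) ⧸ (Jann k A)) ≃ₗ[A ⊗[k] A] ↥(Imul k A) :=
    (Submodule.quotEquivOfEq _ _ hker.symm).trans (m.quotKerEquivOfSurjective hm)
  let eB : ((A ⊗[k] A) ⧸ (Jann k A)) ≃ₗ[A] ↥(Imul k A) := eB'.restrictScalars A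
  have hBfin : Module.Finite A ((A ⊗[k] A) ⧸ (Jann k A)) := Module.Finite.equiv eB.symm
  have hBproj : Module.Projective A ((A ⊗[k] A) ⧸ (Jann k A)) :=
    Module.Projective.of_equiv eB.symm
  refine ⟨⟨hIfin, hIproj, fun q hq => free_aux q _ (hIrank q)⟩,
    ⟨hBfin, hBproj, fun q hq => free_aux q _ ?_⟩, ?_⟩
  · rw [Module.rankAtStalk_eq_of_equiv eB, hIrank]
  -- J free
  let m' : A ⊗[k] A →ₗ[A] ↥(Imul k A) := m.restrictScalars A
  let j : ↥(Jann k A) →ₗ[A] A ⊗[k] A := (Submodule.subtype (Jann k A)).restrictScalars A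
  have hexJ : Function.Exact j m' := fun x => by
    have : m' x = 0 ↔ x ∈ Jann k A := by rw [← hker]; rfl
    rw [this]
    exact ⟨fun h => ⟨⟨x, h⟩, rfl⟩, fun ⟨y, hy⟩ => hy ▸ y.2⟩
  obtain ⟨e2⟩ := split_aux j m' hexJ Subtype.val_injective hm
  obtain ⟨v, hv⟩ := hJ
  have hvJ : v ∈ Jann k A := by rw [hv]; exact Submodule.mem_span_singleton_self v
  let s : A →ₗ[A] ↥(Jann k A) := LinearMap.toSpanSingleton _ _ ⟨v, hvJ⟩
  have hs : Function.Surjective s := by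
    rintro ⟨x, hx⟩
    have hx' := hx
    rw [hv, Submodule.mem_span_singleton] at hx'
    obtain ⟨a, rfl⟩ := hx'
    refine ⟨g a, Subtype.ext ?_⟩
    change g a • v = a • v
    have h0 : g a ⊗ₜ[k] (1 : A) - a ∈ Imul k A := by
      rw [← hgI, map_sub, hg1, sub_self]
    have h1 := Submodule.mem_annihilator.1 hvJ _ h0
    rw [smul_eq_mul, mul_sub, sub_eq_zero] at h1
    rw [Algebra.smul_def, smul_eq_mul, mul_comm a, ← h1, mul_comm]
    rfl
  let T : (↥(Imul k A) × A) →ₗ[A] (↥(Imul k A) × A) :=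
    (e1.toLinearMap ∘ₗ e2.symm.toLinearMap ∘ₗ (LinearEquiv.prodComm A _ _).toLinearMap) ∘ₗ
      (LinearMap.id.prodMap s)
  have hT : Function.Surjective T := by
    refine (e1.surjective.comp (e2.symm.surjective.comp (LinearEquiv.surjective _))).comp ?_
    exact Function.surjective_id.prodMap hs
  have hTi : Function.Injective T := OrzechProperty.injective_of_surjective_endomorphism T hT
  have hsi : Function.Injective s := by
    intro a b hab
    have : T (0, a) = T (0, b) := by simp [T, hab]
    exact congrArg Prod.snd (hTi this)
  exact ⟨(LinearEquiv.ofBijective s ⟨hsi, hs⟩).symm⟩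

end
end

section
/- Under these hypotheses (with r ≥ 1), the k-linear map ψ : ⋀^{r−1}_k A → ⋀^{r−1}_A B, determined by ψ(a_1 ∧ ⋯ ∧ a_{r−1}) = q(1⊗a_1) ∧_A ⋯ ∧_A q(1⊗a_{r−1}) where q : A ⊗[k] A → B is the quotient map, is an isomorphism (here the source is the (r−1)-st exterior power of A as a k-module and the target is the (r−1)-st exterior power of B as an A-module). -/
open TensorProduct

noncomputable section

variable (k A : Type*) [CommRing k] [CommRing A] [Algebra k A]

/-- `B = (A ⊗[k] A)/J`, an `A`-algebra via `a ↦ a ⊗ 1`. -/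
def Bquot : Type _ := (A ⊗[k] A) ⧸ (Jann k A)

instance : CommRing (Bquot k A) := inferInstanceAs (CommRing ((A ⊗[k] A) ⧸ (Jann k A)))
instance : Algebra A (Bquot k A) := inferInstanceAs (Algebra A ((A ⊗[k] A) ⧸ (Jann k A)))

/-- The quotient map `q : A ⊗[k] A → B`. -/
def qmap : A ⊗[k] A →+* Bquot k A := Ideal.Quotient.mk (Jann k A)

/-- Smul of pure left element. -/
lemma aux_smul_eq {k A : Type*} [CommRing k] [CommRing A] [Algebra k A] (a : A) (x : A ⊗[k] A) :
    a • x = (a ⊗ₜ[k] (1 : A)) * x := by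
  rw [Algebra.smul_def]; rfl

lemma aux_retract {k A : Type*} [CommRing k] [CommRing A] [Algebra k A]
    [Module.Finite k A] [Module.Projective k A] (f g : A ⊗[k] A)
    (hf : ∀ x : A ⊗[k] A, Algebra.TensorProduct.lmul' k (S := A) x = 0 ↔ ∃ z, x = f * z)
    (hg : ∀ x : A ⊗[k] A, f * x = 0 ↔ ∃ z, x = g * z) :
    (∀ z, g * z = (Algebra.TensorProduct.lmul' k (S := A) z) • g) ∧
    ∃ p : (A ⊗[k] A) →ₗ[A] A, p g = 1 := by
  set μ := Algebra.TensorProduct.lmul' k (S := A) with hμ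
  have hfg : f * g = 0 := (hg g).2 ⟨1, by simp⟩
  have hμs : ∀ (a : A) (x : A ⊗[k] A), μ (a • x) = a * μ x := by
    intro a x
    rw [aux_smul_eq, map_mul]; simp [hμ]
  have key : ∀ z, g * z = (μ z) • g := by
    intro z
    have h0 : μ (z - (μ z) • (1 : A ⊗[k] A)) = 0 := by
      rw [map_sub, hμs]; simp
    obtain ⟨w, hw⟩ := (hf _).1 h0
    have : g * (z - (μ z) • (1 : A ⊗[k] A)) = 0 := by
      rw [hw, ← mul_assoc, mul_comm g f, hfg, zero_mul]
    rw [mul_sub, sub_eq_zero] at this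
    rw [this, aux_smul_eq, aux_smul_eq]; ring
  refine ⟨key, ?_⟩
  let μl : (A ⊗[k] A) →ₗ[A] A :=
    { toFun := μ, map_add' := map_add μ, map_smul' := fun a x => by simp [hμs] }
  let π : (A ⊗[k] A) →ₗ[A] (A ⊗[k] A) := LinearMap.id - μl.smulRight 1
  have hπ : ∀ x, π x = x - μ x • 1 := fun x => rfl
  let F : (A ⊗[k] A) →ₗ[A] (A ⊗[k] A) := LinearMap.mulLeft A f
  have hπF : ∀ x, π x ∈ LinearMap.range F := by
    intro x
    obtain ⟨w, hw⟩ := (hf (π x)).1 (by rw [hπ, map_sub, hμs]; simp)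
    exact ⟨w, hw.symm⟩
  obtain ⟨s, hs⟩ := Module.projective_lifting_property F.rangeRestrict
    (π.codRestrict (LinearMap.range F) hπF) F.surjective_rangeRestrict
  have hs' : ∀ x, f * s x = π x := by
    intro x
    have := congrArg Subtype.val (LinearMap.congr_fun hs x)
    exact this
  let T : (A ⊗[k] A) →ₗ[A] (A ⊗[k] A) := μl.smulRight g + s ∘ₗ π
  have hT : ∀ x, T x = μ x • g + s (π x) := fun x => rfl
  have hTs : Function.Surjective T := by
    intro y
    have hμf : μ (f * y) = 0 := (hf _).2 ⟨y, rfl⟩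
    have hπf : π (f * y) = f * y := by rw [hπ, hμf]; simp
    have hπ1 : π 1 = 0 := by rw [hπ]; simp
    have : f * (y - s (f * y)) = 0 := by rw [mul_sub, hs', hπf, sub_self]
    obtain ⟨z, hz⟩ := (hg _).1 this
    rw [key] at hz
    refine ⟨μ z • 1 + f * y, ?_⟩
    rw [hT, map_add, hμs, hμf, map_add π, hπf, map_smul, hπ1]
    simp only [map_one, mul_one, add_zero, smul_zero, zero_add]
    rw [← hz]; ring
  have hTi : Function.Injective T := OrzechProperty.injective_of_surjective_endomorphism T hTs
  let e := LinearEquiv.ofBijective T ⟨hTi, hTs⟩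
  refine ⟨μl ∘ₗ e.symm.toLinearMap, ?_⟩
  have h1 : e 1 = g := by
    change T 1 = g
    rw [hT]
    have hπ1 : π 1 = 0 := by rw [hπ]; simp
    rw [hπ1]; simp
  have : e.symm g = 1 := by rw [← h1]; simp
  change μ (e.symm g) = 1
  rw [this, map_one]

/-- dual basis -/
lemma aux_dual_basis (k A : Type*) [CommRing k] [AddCommGroup A] [Module k A]
    [Module.Finite k A] [Module.Projective k A] :
    ∃ (m : ℕ) (e : Fin m → A) (φ : Fin m → A →ₗ[k] k), ∀ a, ∑ i, φ i a • e i = a := by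
  obtain ⟨m, f, g, -, -, h⟩ := Module.Finite.exists_comp_eq_id_of_projective k A
  refine ⟨m, fun i => f (Pi.single i 1), fun i => LinearMap.proj i ∘ₗ g, fun a => ?_⟩
  have := LinearMap.congr_fun h a
  simp only [LinearMap.comp_apply, LinearMap.id_apply] at this
  conv_rhs => rw [← this, pi_eq_sum_univ' (g a)]
  simp [map_sum]

/-- contraction of the second factor -/
def ctr {k A : Type*} [CommRing k] [CommRing A] [Algebra k A] (φ : A →ₗ[k] k) :
    (A ⊗[k] A) →ₗ[A] A := 
  (AlgebraTensorModule.rid k A A).toLinearMap ∘ₗ AlgebraTensorModule.map LinearMap.id φ 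

@[simp] lemma ctr_tmul {k A : Type*} [CommRing k] [CommRing A] [Algebra k A] (φ : A →ₗ[k] k)
    (a b : A) : ctr φ (a ⊗ₜ[k] b) = φ b • a := by
  simp [ctr]

lemma ctr_sum {k A : Type*} [CommRing k] [CommRing A] [Algebra k A] {m : ℕ}
    (ξ : Fin m → A →ₗ[k] k) (g : A ⊗[k] A) : ctr (∑ i, ξ i) g = ∑ i, ctr (ξ i) g := by
  induction g with
  | zero => simp
  | add x y hx hy => simp only [map_add, hx, hy, Finset.sum_add_distrib]
  | tmul x y => simp [Finset.sum_smul]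

lemma aux_surj {k A : Type*} [CommRing k] [CommRing A] [Algebra k A]
    [Module.Finite k A] [Module.Projective k A] (g : A ⊗[k] A)
    (hg : ∀ z, g * z = (Algebra.TensorProduct.lmul' k (S := A) z) • g)
    (p : (A ⊗[k] A) →ₗ[A] A) (hp : p g = 1) (a : A) : ∃ φ : A →ₗ[k] k, ctr φ g = a := by
  obtain ⟨m, e, φ, h⟩ := aux_dual_basis k A
  have hx : ∀ x : A ⊗[k] A, x = ∑ i, ctr (φ i) x ⊗ₜ[k] e i := by
    intro x
    induction x with
    | zero => simp
    | add x y hx hy => 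
      simp only [map_add, TensorProduct.add_tmul, Finset.sum_add_distrib]
      rw [← hx, ← hy]
    | tmul x y =>
      simp only [ctr_tmul, TensorProduct.smul_tmul]
      rw [← TensorProduct.tmul_sum, h]
  refine ⟨∑ i, φ i ∘ₗ LinearMap.mulLeft k (a * p (1 ⊗ₜ e i)), ?_⟩
  have hc : ∀ (c : A) (φ : A →ₗ[k] k) (x : A ⊗[k] A), ctr (φ ∘ₗ LinearMap.mulLeft k c) x =
      ctr φ (x * (1 ⊗ₜ c)) := by
    intro c φ x
    induction x with
    | zero => simp
    | add x y hx hy => simp only [map_add, hx, hy, add_mul]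
    | tmul x y => simp [mul_comm]
  have hsum : ctr (∑ i, φ i ∘ₗ LinearMap.mulLeft k (a * p (1 ⊗ₜ e i))) g =
      ∑ i, ctr (φ i ∘ₗ LinearMap.mulLeft k (a * p (1 ⊗ₜ e i))) g := by
    exact ctr_sum _ _
  rw [hsum]
  simp_rw [hc, hg, map_smul]
  have h1 : ∑ i, ctr (φ i) g * p (1 ⊗ₜ e i) = 1 := by
    refine Eq.trans ?_ hp
    conv_rhs => rw [hx g]
    rw [map_sum]
    refine Finset.sum_congr rfl fun i _ => ?_
    rw [← smul_eq_mul, ← map_smul, TensorProduct.smul_tmul', smul_eq_mul, mul_one]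
  simp only [Algebra.TensorProduct.lmul'_apply_tmul, one_mul, smul_eq_mul]
  calc _ = a * ∑ i, ctr (φ i) g * p (1 ⊗ₜ e i) := by
        rw [Finset.mul_sum]; refine Finset.sum_congr rfl fun i _ => by ring
    _ = a := by rw [h1, mul_one]

lemma aux_swap {k A : Type*} [CommRing k] [CommRing A] [Algebra k A]
    [Module.Finite k A] [Module.Projective k A] (f g : A ⊗[k] A)
    (hf : ∀ x : A ⊗[k] A, Algebra.TensorProduct.lmul' k (S := A) x = 0 ↔ ∃ z, x = f * z)
    (hg : ∀ x : A ⊗[k] A, f * x = 0 ↔ ∃ z, x = g * z) (a : A) :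
    ∃ φ : A →ₗ[k] k, TensorProduct.lid k A (TensorProduct.map φ LinearMap.id g) = a := by
  let σ := Algebra.TensorProduct.comm k A A
  have hσ : ∀ x, σ (σ x) = x := fun x => (Algebra.TensorProduct.comm k A A).symm_apply_apply x
  have hμσ : ∀ x, Algebra.TensorProduct.lmul' k (S := A) (σ x) =
      Algebra.TensorProduct.lmul' k (S := A) x := by
    intro x
    induction x with
    | zero => simp
    | add x y hx hy => simp only [map_add, hx, hy]
    | tmul x y => simp [σ, mul_comm]
  obtain ⟨h1, p, hp⟩ := aux_retract (σ f) (σ g)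
    (fun x => by
      rw [← hμσ, hf]
      exact ⟨fun ⟨z, hz⟩ => ⟨σ z, by rw [← map_mul, ← hz, hσ]⟩,
        fun ⟨z, hz⟩ => ⟨σ z, by rw [hz, map_mul, hσ]⟩⟩)
    (fun x => by
      have : σ f * x = 0 ↔ f * σ x = 0 := by
        rw [← EmbeddingLike.map_eq_zero_iff (f := σ), map_mul, hσ]
      rw [this, hg]
      exact ⟨fun ⟨z, hz⟩ => ⟨σ z, by rw [← map_mul, ← hz, hσ]⟩,
        fun ⟨z, hz⟩ => ⟨σ z, by rw [hz, map_mul, hσ]⟩⟩)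
  obtain ⟨φ, hφ⟩ := aux_surj (σ g) h1 p hp a
  refine ⟨φ, ?_⟩
  rw [← hφ]
  clear hφ hp h1 hf hg
  induction g with
  | zero => simp
  | add x y hx hy => simp only [map_add, hx, hy]
  | tmul x y => simp [σ]

open ExteriorAlgebra in
/-- base change map on exterior algebras -/
def thetaMap (k A : Type*) [CommRing k] [CommRing A] [Algebra k A] :
    ExteriorAlgebra k A →ₐ[k] ExteriorAlgebra A (A ⊗[k] A) :=
  ExteriorAlgebra.lift k ⟨((ExteriorAlgebra.ι A).restrictScalars k) ∘ₗ
    (TensorProduct.mk k A A 1), fun m => by simp⟩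

@[simp] lemma thetaMap_ι {k A : Type*} [CommRing k] [CommRing A] [Algebra k A] (a : A) :
    thetaMap k A (ExteriorAlgebra.ι k a) = ExteriorAlgebra.ι A (1 ⊗ₜ[k] a) := by
  simp [thetaMap]

lemma thetaMap_ιMulti {k A : Type*} [CommRing k] [CommRing A] [Algebra k A] (n : ℕ)
    (v : Fin n → A) : thetaMap k A (ExteriorAlgebra.ιMulti k n v) =
      ExteriorAlgebra.ιMulti A n (fun i => (1 : A) ⊗ₜ[k] v i) := by
  simp only [ExteriorAlgebra.ιMulti_apply, map_list_prod, List.map_ofFn]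
  congr 2
  ext i
  simp

lemma thetaMap_mem {k A : Type*} [CommRing k] [CommRing A] [Algebra k A] (n : ℕ)
    (x : ExteriorAlgebra k A) (hx : x ∈ ⋀[k]^n A) : thetaMap k A x ∈ ⋀[A]^n (A ⊗[k] A) := by
  rw [← ExteriorAlgebra.ιMulti_span_fixedDegree] at hx
  induction hx using Submodule.span_induction with
  | mem x h =>
    obtain ⟨v, rfl⟩ := h
    rw [thetaMap_ιMulti]
    exact ExteriorAlgebra.ιMulti_range A n ⟨_, rfl⟩
  | zero => simp
  | add x y _ _ hx hy => rw [map_add]; exact add_mem hx hy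
  | smul c x _ hx =>
    rw [map_smul, ← algebraMap_smul A c]
    exact Submodule.smul_mem _ _ hx

lemma extMap_mem {R M N : Type*} [CommRing R] [AddCommGroup M] [Module R M] [AddCommGroup N]
    [Module R N] (n : ℕ) (q : M →ₗ[R] N)
    (x : ExteriorAlgebra R M) (hx : x ∈ ⋀[R]^n M) : ExteriorAlgebra.map q x ∈ ⋀[R]^n N := by
  rw [← ExteriorAlgebra.ιMulti_span_fixedDegree] at hx
  induction hx using Submodule.span_induction with
  | mem x h =>
    obtain ⟨v, rfl⟩ := h
    rw [ExteriorAlgebra.map_apply_ιMulti]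
    exact ExteriorAlgebra.ιMulti_range R n ⟨_, rfl⟩
  | zero => simp
  | add x y _ _ hx hy => rw [map_add]; exact add_mem hx hy
  | smul c x _ hx =>
    rw [map_smul]
    exact Submodule.smul_mem _ _ hx

/-- contraction on the exterior algebra -/
def extContract {R M : Type*} [CommRing R] [AddCommGroup M] [Module R M] (d : M →ₗ[R] R) :
    ExteriorAlgebra R M →ₗ[R] ExteriorAlgebra R M :=
  CliffordAlgebra.contractLeft (Q := (0 : QuadraticForm R M)) d

lemma extContract_ι_mul {R M : Type*} [CommRing R] [AddCommGroup M] [Module R M] (d : M →ₗ[R] R)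
    (v : M) (x : ExteriorAlgebra R M) : extContract d (ExteriorAlgebra.ι R v * x) =
      d v • x - ExteriorAlgebra.ι R v * extContract d x :=
  CliffordAlgebra.contractLeft_ι_mul _ _ _

lemma extContract_algebraMap {R M : Type*} [CommRing R] [AddCommGroup M] [Module R M]
    (d : M →ₗ[R] R) (c : R) : extContract d (algebraMap R (ExteriorAlgebra R M) c) = 0 :=
  CliffordAlgebra.contractLeft_algebraMap _ _ _

lemma ext_left_induction {R M : Type*} [CommRing R] [AddCommGroup M] [Module R M]
    {P : ExteriorAlgebra R M → Prop} (h0 : ∀ c, P (algebraMap R _ c))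
    (ha : ∀ x y, P x → P y → P (x + y)) (hm : ∀ x v, P x → P (ExteriorAlgebra.ι R v * x))
    (x : ExteriorAlgebra R M) : P x :=
  CliffordAlgebra.left_induction (Q := (0 : QuadraticForm R M)) (P := P) h0 ha hm x

lemma extContract_mem {R M : Type*} [CommRing R] [AddCommGroup M] [Module R M]
    (d : M →ₗ[R] R) (n : ℕ) (x : ExteriorAlgebra R M) (hx : x ∈ ⋀[R]^(n + 1) M) :
    extContract d x ∈ ⋀[R]^n M := by
  rw [← ExteriorAlgebra.ιMulti_span_fixedDegree] at hx
  induction hx using Submodule.span_induction with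
  | mem x h =>
    obtain ⟨v, rfl⟩ := h
    induction n with
    | zero => 
      rw [ExteriorAlgebra.ιMulti_succ_apply, extContract_ι_mul, ExteriorAlgebra.ιMulti_zero_apply]
      have : extContract d (1 : ExteriorAlgebra R M) = 0 := by
        simpa using extContract_algebraMap (M := M) d 1
      rw [this, mul_zero, sub_zero]
      refine Submodule.smul_mem _ _ ?_
      simp [Submodule.one_le.1]
    | succ n ih =>
      rw [ExteriorAlgebra.ιMulti_succ_apply, extContract_ι_mul]
      refine sub_mem (Submodule.smul_mem _ _ (ExteriorAlgebra.ιMulti_range R _ ⟨_, rfl⟩)) ?_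
      have h2 := ih (Matrix.vecTail v)
      rw [ExteriorAlgebra.exteriorPower, pow_succ']
      exact Submodule.mul_mem_mul ⟨_, rfl⟩ h2
  | zero => simp
  | add x y _ _ hx hy => rw [map_add]; exact add_mem hx hy
  | smul c x _ hx =>
    rw [map_smul]
    exact Submodule.smul_mem _ _ hx

lemma theta_contract {k A : Type*} [CommRing k] [CommRing A] [Algebra k A] (φ : A →ₗ[k] k)
    (x : ExteriorAlgebra k A) :
    thetaMap k A (extContract φ x) = extContract (ctr φ) (thetaMap k A x) := by
  induction x using ext_left_induction with
  | h0 c => 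
    rw [extContract_algebraMap, AlgHom.commutes, map_zero,
      IsScalarTower.algebraMap_apply k A, extContract_algebraMap]
  | ha x y hx hy => simp only [map_add, hx, hy]
  | hm x v hx => 
    rw [extContract_ι_mul, map_sub, map_mul, map_mul, thetaMap_ι, extContract_ι_mul, hx, map_smul,
      ctr_tmul, smul_assoc, one_smul]

lemma theta_span {k A : Type*} [CommRing k] [CommRing A] [Algebra k A] (n : ℕ) 
    (x : ExteriorAlgebra A (A ⊗[k] A)) (hx : x ∈ ⋀[A]^n (A ⊗[k] A)) :
    x ∈ Submodule.span A (thetaMap k A '' (⋀[k]^n A : Submodule k (ExteriorAlgebra k A))) := by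
  have hs : Submodule.span A (Set.range fun a : A => (1 : A) ⊗ₜ[k] a) = ⊤ := by
    rw [eq_top_iff]
    rintro x -
    induction x with
    | zero => simp
    | add x y hx hy => exact add_mem hx hy
    | tmul x y =>
      have : x ⊗ₜ[k] y = x • ((1 : A) ⊗ₜ[k] y) := by simp [TensorProduct.smul_tmul']
      rw [this]
      exact Submodule.smul_mem _ _ (Submodule.subset_span ⟨y, rfl⟩)
  rw [← exteriorPower.ιMulti_span_fixedDegree_of_span_eq_top A n _ hs] at hx
  refine Submodule.span_mono ?_ hx
  rintro _ ⟨v, hv, rfl⟩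
  choose w hw using fun i => hv ⟨i, rfl⟩
  refine ⟨ExteriorAlgebra.ιMulti k n w, ExteriorAlgebra.ιMulti_range k n ⟨_, rfl⟩, ?_⟩
  rw [thetaMap_ιMulti]
  congr 1
  ext i
  exact hw i

lemma ext_mul_map {R M : Type*} [CommRing R] [AddCommGroup M] [Module R M]
    (p : M →ₗ[R] R) (g : M) (x : ExteriorAlgebra R M) :
    ExteriorAlgebra.ι R g * ExteriorAlgebra.map (LinearMap.id - p.smulRight g) x =
      ExteriorAlgebra.ι R g * x := by
  induction x using ext_left_induction with
  | h0 c => simp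
  | ha x y hx hy => simp only [map_add, mul_add, hx, hy]
  | hm x v hx => 
    have hsw : ∀ a b : M, ExteriorAlgebra.ι R a * ExteriorAlgebra.ι R b =
      - (ExteriorAlgebra.ι R b * ExteriorAlgebra.ι R a) := fun a b =>
      eq_neg_of_add_eq_zero_left (ExteriorAlgebra.ι_add_mul_swap a b)
    rw [map_mul, ExteriorAlgebra.map_apply_ι, ← mul_assoc, ← mul_assoc]
    have h1 : ExteriorAlgebra.ι R g * ExteriorAlgebra.ι R ((LinearMap.id - p.smulRight g : M →ₗ[R] M) v) =
        ExteriorAlgebra.ι R g * ExteriorAlgebra.ι R v := by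
      simp [mul_sub]
    rw [h1, hsw g v, neg_mul, neg_mul, mul_assoc, mul_assoc, hx]

lemma ext_q {R M N : Type*} [CommRing R] [AddCommGroup M] [Module R M] [AddCommGroup N]
    [Module R N] (p : M →ₗ[R] R) (g : M) (q : M →ₗ[R] N) (hq : q g = 0) (hp : p g = 1)
    (x : ExteriorAlgebra R M) :
    ExteriorAlgebra.map q (extContract p (ExteriorAlgebra.ι R g * x)) =
      ExteriorAlgebra.map q x := by
  rw [extContract_ι_mul, map_sub, map_mul, ExteriorAlgebra.map_apply_ι, hq, hp]
  simp

/-- linear part of xi -/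
def xiLin (k A : Type*) [CommRing k] [CommRing A] [Algebra k A] :
    (A ⊗[k] A) →ₗ[A] A ⊗[k] ExteriorAlgebra k A :=
  AlgebraTensorModule.map LinearMap.id (ExteriorAlgebra.ι k)

@[simp] lemma xiLin_tmul {k A : Type*} [CommRing k] [CommRing A] [Algebra k A] (a b : A) :
    xiLin k A (a ⊗ₜ b) = a ⊗ₜ ExteriorAlgebra.ι k b := by simp [xiLin]

lemma xiLin_anti {k A : Type*} [CommRing k] [CommRing A] [Algebra k A] (x y : A ⊗[k] A) :
    xiLin k A x * xiLin k A y + xiLin k A y * xiLin k A x = 0 := by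
  induction x with
  | zero => simp
  | add x x' hx hx' => 
    rw [map_add, add_mul, mul_add, add_add_add_comm, hx, hx', add_zero]
  | tmul a b =>
    induction y with
    | zero => simp
    | add x x' hx hx' => 
      rw [map_add, add_mul, mul_add, add_add_add_comm, hx, hx', add_zero]
    | tmul c d =>
      rw [xiLin_tmul, xiLin_tmul, Algebra.TensorProduct.tmul_mul_tmul,
        Algebra.TensorProduct.tmul_mul_tmul, mul_comm c a, ← TensorProduct.tmul_add,
        ExteriorAlgebra.ι_add_mul_swap, TensorProduct.tmul_zero]

lemma xiLin_sq {k A : Type*} [CommRing k] [CommRing A] [Algebra k A] (x : A ⊗[k] A) :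
    xiLin k A x * xiLin k A x = 0 := by
  induction x with
  | zero => simp
  | add x y hx hy =>
    have := xiLin_anti x y
    rw [map_add, add_mul, mul_add, mul_add, hx, hy, zero_add, add_zero, this]
  | tmul a b => simp

/-- the map to the base change of the exterior algebra -/
def xiMap (k A : Type*) [CommRing k] [CommRing A] [Algebra k A] :
    ExteriorAlgebra A (A ⊗[k] A) →ₐ[A] A ⊗[k] ExteriorAlgebra k A :=
  ExteriorAlgebra.lift A ⟨xiLin k A, xiLin_sq⟩

lemma xiMap_theta {k A : Type*} [CommRing k] [CommRing A] [Algebra k A]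
    (x : ExteriorAlgebra k A) : xiMap k A (thetaMap k A x) = 1 ⊗ₜ x := by
  induction x using ext_left_induction with
  | h0 c => 
    rw [AlgHom.commutes, IsScalarTower.algebraMap_apply k A, AlgHom.commutes,
      ← IsScalarTower.algebraMap_apply k A, Algebra.algebraMap_eq_smul_one,
      Algebra.algebraMap_eq_smul_one, TensorProduct.tmul_smul]
    rfl
  | ha x y hx hy => simp only [map_add, hx, hy, TensorProduct.tmul_add]
  | hm x v hx => 
    rw [map_mul, map_mul, hx, thetaMap_ι, xiMap, ExteriorAlgebra.lift_ι_apply, xiLin_tmul]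
    simp

lemma ext_ann {k A : Type*} [CommRing k] [CommRing A] [Algebra k A] (g : A ⊗[k] A)
    (w : ExteriorAlgebra k A) (h : ExteriorAlgebra.ι A g * thetaMap k A w = 0)
    (φ : A →ₗ[k] k) :
    ExteriorAlgebra.ι k (TensorProduct.lid k A (TensorProduct.map φ LinearMap.id g)) * w = 0 := by
  have h1 := congrArg (xiMap k A) h
  rw [map_mul, xiMap_theta, xiMap, ExteriorAlgebra.lift_ι_apply, map_zero] at h1
  have h2 : ∀ g : A ⊗[k] A, TensorProduct.lid k _ (TensorProduct.map φ LinearMap.id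
      (xiLin k A g * (1 ⊗ₜ w))) = ExteriorAlgebra.ι k (TensorProduct.lid k A
      (TensorProduct.map φ LinearMap.id g)) * w := by
    intro g
    induction g with
    | zero => simp
    | add x y hx hy => simp only [map_add, add_mul, hx, hy]
    | tmul a b => simp
  rw [← h2, h1]; simp

lemma ext_euler {R M : Type*} [CommRing R] [AddCommGroup M] [Module R M] {m : ℕ}
    (e : Fin m → M) (φ : Fin m → M →ₗ[R] R) (h : ∀ a, ∑ i, φ i a • e i = a) (n : ℕ)
    (x : ExteriorAlgebra R M) (hx : x ∈ ⋀[R]^n M) :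
    ∑ i, ExteriorAlgebra.ι R (e i) * extContract (φ i) x = (n : R) • x := by
  rw [← ExteriorAlgebra.ιMulti_span_fixedDegree] at hx
  induction hx using Submodule.span_induction with
  | mem x h =>
    obtain ⟨v, rfl⟩ := h
    induction n with
    | zero => 
      have : ∀ d, extContract d (1 : ExteriorAlgebra R M) = 0 := fun d => by
        simpa using extContract_algebraMap (M := M) d 1
      simp [this]
    | succ n ih =>
      have hsw : ∀ a b : M, ExteriorAlgebra.ι R a * ExteriorAlgebra.ι R b =
        - (ExteriorAlgebra.ι R b * ExteriorAlgebra.ι R a) := fun a b =>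
        eq_neg_of_add_eq_zero_left (ExteriorAlgebra.ι_add_mul_swap a b)
      rw [ExteriorAlgebra.ιMulti_succ_apply]
      simp_rw [extContract_ι_mul, mul_sub, ← mul_assoc]
      simp_rw [hsw _ (v 0)]
      simp_rw [neg_mul, sub_neg_eq_add, Finset.sum_add_distrib, mul_assoc]
      rw [← Finset.mul_sum, ih]
      have : ∑ i, ExteriorAlgebra.ι R (e i) * (φ i (v 0)) •
          ExteriorAlgebra.ιMulti R n (Matrix.vecTail v) = ExteriorAlgebra.ι R (v 0) *
            ExteriorAlgebra.ιMulti R n (Matrix.vecTail v) := by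
        simp_rw [mul_smul_comm, ← smul_mul_assoc, ← map_smul]
        rw [← Finset.sum_mul, ← map_sum, h]
      rw [this, mul_smul_comm, Nat.cast_succ, add_smul, one_smul, add_comm]
  | zero => simp
  | add x y _ _ hx hy => simp only [map_add, mul_add, Finset.sum_add_distrib, hx, hy, smul_add]
  | smul c x _ hx =>
    simp only [map_smul, mul_smul_comm]
    rw [← Finset.smul_sum, hx, smul_comm]


lemma local_gen {k A : Type*} [CommRing k] [AddCommGroup A] [Module k A] (r : ℕ)
    [Module.Finite k A] (p : Ideal k) [p.IsPrime]
    (hrank : Nonempty (LocalizedModule p.primeCompl A ≃ₗ[Localization p.primeCompl]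
        (Fin r → Localization p.primeCompl))) :
    ∃ s ∉ p, ∃ L : (Fin r → k) →ₗ[k] A, ∀ a, ∃ w, s • a = L w := by
  obtain ⟨b⟩ := hrank
  let S := p.primeCompl
  have h1 : ∀ i, ∃ (e : A) (s : S), s • (b.symm (Pi.single i 1)) = LocalizedModule.mkLinearMap S A e := by
    intro i
    obtain ⟨⟨e, s⟩, h⟩ := IsLocalizedModule.surj S (LocalizedModule.mkLinearMap S A) (b.symm (Pi.single i 1))
    exact ⟨e, s, h⟩
  choose e t he using h1
  let L : (Fin r → k) →ₗ[k] A := Fintype.linearCombination k e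
  -- each element
  have h2 : ∀ a : A, ∃ s : S, s • a ∈ LinearMap.range L := by
    intro a
    let c := b (LocalizedModule.mkLinearMap S A a)
    obtain ⟨u, hu⟩ := IsLocalization.exist_integer_multiples_of_finite S c
    choose d hd using hu
    have h3 : ((u : k) * ∏ i, (t i : k)) • LocalizedModule.mkLinearMap S A a =
        LocalizedModule.mkLinearMap S A (∑ i, (d i * ∏ j ∈ Finset.univ.erase i, (t j : k)) • e i) := by
      have : LocalizedModule.mkLinearMap S A a = ∑ i, c i • b.symm (Pi.single i 1) := by
        apply b.injective
        rw [map_sum]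
        simp only [map_smul, LinearEquiv.apply_symm_apply]
        exact pi_eq_sum_univ' c
      rw [this, map_sum, Finset.smul_sum]
      refine Finset.sum_congr rfl fun i _ => ?_
      rw [map_smul, ← he, ← Finset.mul_prod_erase _ _ (Finset.mem_univ i)]
      have h4 : ((u : k) • c i) = algebraMap k _ (d i) := (hd i).symm
      rw [Submonoid.smul_def, ← mul_smul, ← algebraMap_smul (Localization S) (d i * _ * _),
        ← algebraMap_smul (Localization S) (_ * _), ← mul_smul]
      congr 1
      rw [Algebra.smul_def] at h4
      simp only [map_mul]
      linear_combination (algebraMap k (Localization S) (t i) *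
        algebraMap k (Localization S) (∏ x ∈ Finset.univ.erase i, (t x : k))) * h4
    rw [← map_smul] at h3
    obtain ⟨s, hs⟩ := (IsLocalizedModule.eq_iff_exists S (LocalizedModule.mkLinearMap S A)).1 h3
    refine ⟨s * (u * ∏ i, t i), ?_⟩
    have : (s * (u * ∏ i, t i)) • a = s • (((u : k) * ∏ i, (t i : k)) • a) := by
      simp [Submonoid.smul_def, mul_smul]
    rw [this, hs]
    refine Submodule.smul_mem _ _ (Submodule.sum_mem _ fun i _ => Submodule.smul_mem _ _ ?_)
    exact ⟨Pi.single i 1, by simp [L, Fintype.linearCombination_apply_single]⟩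
  choose s hs using h2
  classical
  obtain ⟨T, hT⟩ := (Module.finite_def.1 ‹Module.Finite k A›)
  refine ⟨∏ a ∈ T, (s a : k), ?_, L, ?_⟩
  · exact prod_mem (S := p.primeCompl) fun a _ => (s a).2
  · intro a
    have ha : a ∈ Submodule.span k (T : Set A) := by rw [hT]; trivial
    suffices h : (∏ a ∈ T, (s a : k)) • a ∈ LinearMap.range L from 
      let ⟨w, hw⟩ := h; ⟨w, hw.symm⟩
    induction ha using Submodule.span_induction with
    | mem x h =>
      rw [← Finset.prod_erase_mul _ _ (Finset.mem_coe.1 h), mul_smul]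
      exact Submodule.smul_mem _ _ (hs x)
    | zero => simp
    | add x y _ _ hx hy => rw [smul_add]; exact add_mem hx hy
    | smul c x _ hx => rw [smul_comm]; exact Submodule.smul_mem _ _ hx

lemma ext_zero_free {k : Type*} [CommRing k] (r : ℕ) (w : Fin (r + 1) → (Fin r → k)) :
    ExteriorAlgebra.ιMulti k (r + 1) w = 0 := by
  have b := (Pi.basisFun k (Fin r)).exteriorPower (R := k) (n := r + 1)
  have : IsEmpty (Set.powersetCard (Fin r) (r + 1)) := by
    refine ⟨fun s => ?_⟩
    have h1 := s.2
    have h2 := Finset.card_le_univ (s : Finset (Fin r))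
    simp at h1 h2
  have h3 : Subsingleton (⋀[k]^(r + 1) (Fin r → k)) := b.repr.toEquiv.subsingleton
  have := Subsingleton.elim (exteriorPower.ιMulti k (r + 1) w) 0
  exact congrArg Subtype.val this

lemma ext_zero {k A : Type*} [CommRing k] [AddCommGroup A] [Module k A] (r : ℕ)
    [Module.Finite k A]
    (hrank : ∀ (p : Ideal k) [p.IsPrime],
      Nonempty (LocalizedModule p.primeCompl A ≃ₗ[Localization p.primeCompl]
        (Fin r → Localization p.primeCompl))) (x : ExteriorAlgebra k A) (hx : x ∈ ⋀[k]^(r + 1) A) :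
    x = 0 := by
  rw [← ExteriorAlgebra.ιMulti_span_fixedDegree] at hx
  induction hx using Submodule.span_induction with
  | mem x h =>
    obtain ⟨v, rfl⟩ := h
    by_contra hne
    let I : Ideal k := LinearMap.ker (LinearMap.toSpanSingleton k _ (ExteriorAlgebra.ιMulti k (r + 1) v))
    have hI : I ≠ ⊤ := by
      intro h
      have : (1 : k) ∈ I := by rw [h]; trivial
      exact hne (by simpa [I] using this)
    obtain ⟨m, hm, hIm⟩ := Ideal.exists_le_maximal I hI
    obtain ⟨s, hs, L, hL⟩ := local_gen r m (hrank m)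
    choose w hw using hL
    apply hs
    have : s ^ (r + 1) ∈ I := by
      have h1 : ExteriorAlgebra.ιMulti k (r + 1) (fun i => s • v i) =
        s ^ (r + 1) • ExteriorAlgebra.ιMulti k (r + 1) v := by
        have := (ExteriorAlgebra.ιMulti k (r + 1)).map_smul_univ (fun _ => s) v
        simpa using this
      simp only [I, LinearMap.mem_ker, LinearMap.toSpanSingleton_apply]
      rw [← h1]
      have h2 : (fun i => s • v i) = L ∘ (fun i => w (v i)) := by
        ext i; exact hw _
      rw [h2, ← ExteriorAlgebra.map_apply_ιMulti, ext_zero_free, map_zero]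
    exact hm.isPrime.mem_of_pow_mem _ (hIm this)
  | zero => simp
  | add x y _ _ hx hy => rw [hx, hy, add_zero]
  | smul c x _ hx => rw [hx, smul_zero]

lemma trace_dual_basis {k A : Type*} [CommRing k] [AddCommGroup A] [Module k A] (r : ℕ)
    (hrank : ∀ (p : Ideal k) [p.IsPrime],
      Nonempty (LocalizedModule p.primeCompl A ≃ₗ[Localization p.primeCompl]
        (Fin r → Localization p.primeCompl))) {m : ℕ}
    (e : Fin m → A) (φ : Fin m → A →ₗ[k] k) (h : ∀ a, ∑ i, φ i a • e i = a) :
    ∑ i, φ i (e i) = (r : k) := by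
  rw [← sub_eq_zero]
  refine eq_zero_of_localization _ fun p hp => ?_
  rw [map_sub, sub_eq_zero, map_sum, map_natCast]
  obtain ⟨b⟩ := hrank p
  let S := p.primeCompl
  let Φ : Fin m → LocalizedModule S A →ₗ[Localization S] Localization S := fun i =>
    IsLocalizedModule.mapExtendScalars S (LocalizedModule.mkLinearMap S A)
      (Algebra.linearMap k (Localization S)) (Localization S) (φ i)
  have hΦ : ∀ i a, Φ i (LocalizedModule.mkLinearMap S A a) = algebraMap k _ (φ i a) := by
    intro i a
    exact IsLocalizedModule.map_apply S _ _ (φ i) a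
  have hid : (∑ i, (Φ i).smulRight (LocalizedModule.mkLinearMap S A (e i))) = LinearMap.id := by
    apply LinearMap.restrictScalars_injective k
    refine IsLocalizedModule.linearMap_ext S (LocalizedModule.mkLinearMap S A)
      (LocalizedModule.mkLinearMap S A) ?_
    ext a
    have h1 : (∑ i, (Φ i).smulRight (LocalizedModule.mkLinearMap S A (e i)))
        (LocalizedModule.mkLinearMap S A a) = LocalizedModule.mkLinearMap S A a := by
      rw [LinearMap.sum_apply]
      simp only [LinearMap.smulRight_apply, hΦ, algebraMap_smul, ← map_smul]
      rw [← map_sum, h]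
    exact h1
  have hfree : Module.Free (Localization S) (LocalizedModule S A) := Module.Free.of_equiv b.symm
  have hfin : Module.Finite (Localization S) (LocalizedModule S A) := Module.Finite.equiv b.symm
  have htr := congrArg (LinearMap.trace (Localization S) (LocalizedModule S A)) hid
  rw [map_sum, LinearMap.trace_id, b.finrank_eq, Module.finrank_fin_fun] at htr
  rw [← htr]
  refine Finset.sum_congr rfl fun i _ => ?_
  have : (Φ i).smulRight (LocalizedModule.mkLinearMap S A (e i)) = 
    dualTensorHom _ _ _ (Φ i ⊗ₜ LocalizedModule.mkLinearMap S A (e i)) := by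
    ext; simp [dualTensorHom_apply]
  rw [this, LinearMap.trace_eq_contract_apply, contractLeft_apply, hΦ]

lemma main_aux {k A N : Type*} [CommRing k] [CommRing A] [Algebra k A] [AddCommGroup N] [Module A N]
    (n : ℕ) [Module.Finite k A] [Module.Projective k A]
    (hrank : ∀ (p : Ideal k) [p.IsPrime],
      Nonempty (LocalizedModule p.primeCompl A ≃ₗ[Localization p.primeCompl]
        (Fin (n + 1) → Localization p.primeCompl)))
    (f g : A ⊗[k] A)
    (hf : ∀ x : A ⊗[k] A, Algebra.TensorProduct.lmul' k (S := A) x = 0 ↔ ∃ z, x = f * z)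
    (hg : ∀ x : A ⊗[k] A, f * x = 0 ↔ ∃ z, x = g * z)
    (q : A ⊗[k] A →ₗ[A] N) (hq : Function.Surjective q) (hqk : ∀ x, q x = 0 ↔ ∃ z, x = g * z) :
    (∀ w ∈ ⋀[k]^n A, ExteriorAlgebra.map q (thetaMap k A w) = 0 → w = 0) ∧
    (∀ y ∈ ⋀[A]^n N, ∃ w ∈ ⋀[k]^n A, ExteriorAlgebra.map q (thetaMap k A w) = y) := by
  obtain ⟨hgm, p, hp⟩ := aux_retract f g hf hg
  have hqg : q g = 0 := (hqk g).2 ⟨1, by simp⟩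
  constructor
  · intro w hw h0
    -- the map `id - g p` factors through `q`
    let H : A ⊗[k] A →ₗ[A] A ⊗[k] A := LinearMap.id - p.smulRight g
    have hker : LinearMap.ker q ≤ LinearMap.ker H := by
      intro x hx
      obtain ⟨z, hz⟩ := (hqk x).1 hx
      rw [hgm] at hz
      simp [H, hz, hp]
    let σ : N →ₗ[A] A ⊗[k] A := (LinearMap.ker q).liftQ H hker ∘ₗ
      (q.quotKerEquivOfSurjective hq).symm.toLinearMap
    have hσ : σ ∘ₗ q = H := by
      refine LinearMap.ext fun x => ?_
      have h1 : (q.quotKerEquivOfSurjective hq).symm (q x) = (LinearMap.ker q).mkQ x := by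
        rw [LinearEquiv.symm_apply_eq]
        rfl
      change (LinearMap.ker q).liftQ H hker ((q.quotKerEquivOfSurjective hq).symm (q x)) = H x
      rw [h1]
      rfl
    have h1 : ExteriorAlgebra.map H (thetaMap k A w) = 0 := by
      rw [← hσ, ← ExteriorAlgebra.map_comp_map, AlgHom.comp_apply, h0, map_zero]
    have h2 : ExteriorAlgebra.ι A g * thetaMap k A w = 0 := by
      rw [← ext_mul_map p g, h1, mul_zero]
    have h3 : ∀ a : A, ExteriorAlgebra.ι k a * w = 0 := by
      intro a
      obtain ⟨φ, hφ⟩ := aux_swap f g hf hg a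
      rw [← hφ]
      exact ext_ann g w h2 φ
    obtain ⟨m, e, φ, he⟩ := aux_dual_basis k A
    have ht := trace_dual_basis (n + 1) hrank e φ he
    have hE := ext_euler e φ he n w hw
    have h4 : ∑ i, extContract (φ i) (ExteriorAlgebra.ι k (e i) * w) = 0 := by simp [h3]
    simp_rw [extContract_ι_mul, Finset.sum_sub_distrib] at h4
    rw [hE, ← Finset.sum_smul, ht, Nat.cast_succ, add_smul, one_smul, add_sub_cancel_left] at h4
    exact h4
  · intro y hy
    -- lift `y`
    obtain ⟨x, hx, rfl⟩ : ∃ x ∈ ⋀[A]^n (A ⊗[k] A), ExteriorAlgebra.map q x = y := by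
      rw [← ExteriorAlgebra.ιMulti_span_fixedDegree] at hy
      induction hy using Submodule.span_induction with
      | mem y h =>
        obtain ⟨v, rfl⟩ := h
        choose w hw using fun i => hq (v i)
        refine ⟨ExteriorAlgebra.ιMulti A n w, ExteriorAlgebra.ιMulti_range A n ⟨_, rfl⟩, ?_⟩
        rw [ExteriorAlgebra.map_apply_ιMulti]
        congr 1
        exact funext hw
      | zero => exact ⟨0, zero_mem _, map_zero _⟩
      | add x y _ _ hx hy =>
        obtain ⟨w, hw, rfl⟩ := hx
        obtain ⟨v, hv, rfl⟩ := hy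
        exact ⟨w + v, add_mem hw hv, map_add _ _ _⟩
      | smul c x _ hx =>
        obtain ⟨w, hw, rfl⟩ := hx
        exact ⟨c • w, Submodule.smul_mem _ _ hw, map_smul _ _ _⟩
    have hzero : ∀ x ∈ ⋀[A]^(n + 1 + 1) (A ⊗[k] A), x = 0 := by
      intro x hx
      have := theta_span _ x hx
      clear hx
      induction this using Submodule.span_induction with
      | mem x h =>
        obtain ⟨w, hw, rfl⟩ := h
        rw [ext_zero (n + 1) hrank w hw, map_zero]
      | zero => rfl
      | add x y _ _ hx hy => rw [hx, hy, add_zero]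
      | smul c x _ hx => rw [hx, smul_zero]
    have key : ∀ z ∈ ⋀[A]^(n + 1) (A ⊗[k] A), ∃ w ∈ ⋀[k]^n A,
        ExteriorAlgebra.ι A g * thetaMap k A w = z := by
      intro z hz
      have := theta_span _ z hz
      clear hz
      suffices H : ∀ a : A, ∃ w ∈ ⋀[k]^n A,
        ExteriorAlgebra.ι A g * thetaMap k A w = a • z by simpa using H 1
      induction this using Submodule.span_induction with
      | mem x h =>
        obtain ⟨τ, hτ, rfl⟩ := h
        intro a
        obtain ⟨φ, hφ⟩ := aux_surj g hgm p hp a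
        refine ⟨extContract φ τ, extContract_mem φ n τ hτ, ?_⟩
        have h0 : ExteriorAlgebra.ι A g * thetaMap k A τ = 0 := by
          apply hzero
          rw [ExteriorAlgebra.exteriorPower, pow_succ']
          exact Submodule.mul_mem_mul ⟨_, rfl⟩ (thetaMap_mem _ _ hτ)
        have h1 := extContract_ι_mul (ctr φ) g (thetaMap k A τ)
        rw [h0, map_zero, hφ] at h1
        rw [theta_contract]
        exact (sub_eq_zero.1 h1.symm).symm
      | zero => exact fun a => ⟨0, zero_mem _, by simp⟩
      | add x y _ _ hx hy =>
        intro a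
        obtain ⟨w, hw, hw'⟩ := hx a
        obtain ⟨v, hv, hv'⟩ := hy a
        exact ⟨w + v, add_mem hw hv, by rw [map_add, mul_add, hw', hv', smul_add]⟩
      | smul c x _ hx =>
        intro a
        obtain ⟨w, hw, hw'⟩ := hx (a * c)
        exact ⟨w, hw, by rw [hw', mul_smul]⟩
    obtain ⟨w, hw, hw'⟩ := key (ExteriorAlgebra.ι A g * x) (by
      rw [ExteriorAlgebra.exteriorPower, pow_succ']
      exact Submodule.mul_mem_mul ⟨_, rfl⟩ hx)
    refine ⟨w, hw, ?_⟩
    rw [← ext_q p g q hqg hp, hw', ext_q p g q hqg hp]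
/-- Let `k` be a commutative ring and `A` a commutative `k`-algebra which, as
a `k`-module, is finitely generated projective of constant rank `r ≥ 1`.  Assume the ideals
`I = ker(μ)` and `J = Ann(I)` of `A ⊗[k] A` are principal, and put `B = (A ⊗[k] A)/J`.  Then
the `k`-linear map `ψ : ⋀^{r−1}_k A → ⋀^{r−1}_A B` determined by
`ψ(a_1 ∧ ⋯ ∧ a_{r−1}) = q(1⊗a_1) ∧_A ⋯ ∧_A q(1⊗a_{r−1})` is an isomorphism, where the source
is the `(r−1)`-st exterior power of `A` as a `k`-module and the target is the `(r−1)`-st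
exterior power of `B` as an `A`-module (viewed as a `k`-module by restriction of scalars). -/
theorem stmt3 (r : ℕ) (hr : 1 ≤ r) [Module.Finite k A] [Module.Projective k A]
    (hrank : ∀ (p : Ideal k) [p.IsPrime],
      Nonempty (LocalizedModule p.primeCompl A ≃ₗ[Localization p.primeCompl]
        (Fin r → Localization p.primeCompl)))
    (hI : (Imul k A).IsPrincipal) (hJ : (Jann k A).IsPrincipal) :
    ∃ ψ : ↥(⋀[k]^(r - 1) A) →ₗ[k] RestrictScalars k A ↥(⋀[A]^(r - 1) (Bquot k A)),
      Function.Bijective ψ ∧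
        ∀ (v : Fin (r - 1) → A) (x : ↥(⋀[k]^(r - 1) A)),
          (x : ExteriorAlgebra k A) = ExteriorAlgebra.ιMulti k (r - 1) v →
            ((RestrictScalars.addEquiv k A ↥(⋀[A]^(r - 1) (Bquot k A))) (ψ x)
                : ExteriorAlgebra A (Bquot k A)) =
              ExteriorAlgebra.ιMulti A (r - 1) fun i => qmap k A ((1 : A) ⊗ₜ[k] v i) := by
  generalize hn : r - 1 = n
  obtain rfl : r = n + 1 := by omega
  clear hn
  obtain ⟨f, hf⟩ := hI
  obtain ⟨g, hg⟩ := hJ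
  have hf' : ∀ x : A ⊗[k] A, Algebra.TensorProduct.lmul' k (S := A) x = 0 ↔ ∃ z, x = f * z := by
    intro x
    have h1 : x ∈ Imul k A ↔ x ∈ Submodule.span (A ⊗[k] A) {f} := by rw [hf]
    rw [Submodule.mem_span_singleton] at h1
    refine Iff.trans h1 ⟨fun ⟨z, hz⟩ => ⟨z, ?_⟩, fun ⟨z, hz⟩ => ⟨z, ?_⟩⟩
    · rw [← hz, smul_eq_mul, mul_comm]
    · rw [hz, smul_eq_mul, mul_comm]
  have hJg : ∀ x : A ⊗[k] A, x ∈ Jann k A ↔ ∃ z, x = g * z := by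
    intro x
    have h1 : x ∈ Jann k A ↔ x ∈ Submodule.span (A ⊗[k] A) {g} := by rw [hg]
    rw [Submodule.mem_span_singleton] at h1
    refine Iff.trans h1 ⟨fun ⟨z, hz⟩ => ⟨z, ?_⟩, fun ⟨z, hz⟩ => ⟨z, ?_⟩⟩
    · rw [← hz, smul_eq_mul, mul_comm]
    · rw [hz, smul_eq_mul, mul_comm]
  have hg' : ∀ x : A ⊗[k] A, f * x = 0 ↔ ∃ z, x = g * z := by
    intro x
    rw [← hJg, Jann, hf, Submodule.mem_annihilator_span_singleton, smul_eq_mul, mul_comm]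
  let q : A ⊗[k] A →ₗ[A] Bquot k A := (Ideal.Quotient.mkₐ A (Jann k A)).toLinearMap
  have hqm : ∀ x, q x = qmap k A x := fun x => rfl
  have hq : Function.Surjective q := Ideal.Quotient.mk_surjective
  have hqk : ∀ x, q x = 0 ↔ ∃ z, x = g * z := by
    intro x
    rw [← hJg]
    exact Ideal.Quotient.eq_zero_iff_mem
  obtain ⟨hinj, hsurj⟩ := main_aux n hrank f g hf' hg' q hq hqk
  let ψ0 : ↥(⋀[k]^n A) → ↥(⋀[A]^n (Bquot k A)) := fun x =>
    ⟨ExteriorAlgebra.map q (thetaMap k A x), extMap_mem n q _ (thetaMap_mem n _ x.2)⟩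
  let ψ : ↥(⋀[k]^n A) →ₗ[k] RestrictScalars k A ↥(⋀[A]^n (Bquot k A)) :=
    { toFun := fun x => (RestrictScalars.addEquiv k A _).symm (ψ0 x)
      map_add' := fun x y => by
        rw [← map_add]
        congr 1
        apply Subtype.ext
        simp [ψ0]
      map_smul' := fun c x => by
        apply (RestrictScalars.addEquiv k A _).injective
        rw [RingHom.id_apply, RestrictScalars.addEquiv_map_smul]
        simp only [AddEquiv.apply_symm_apply]
        apply Subtype.ext
        simp only [ψ0, Submodule.coe_smul, map_smul]
        rw [← algebraMap_smul A c (thetaMap k A x), map_smul] }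
  have hψ : ∀ x, ((RestrictScalars.addEquiv k A ↥(⋀[A]^n (Bquot k A)) (ψ x) :
      ↥(⋀[A]^n (Bquot k A))) : ExteriorAlgebra A (Bquot k A)) =
      ExteriorAlgebra.map q (thetaMap k A x) := fun x => rfl
  refine ⟨ψ, ⟨?_, ?_⟩, ?_⟩
  · rw [injective_iff_map_eq_zero]
    intro x hx
    apply Subtype.ext
    apply hinj x x.2
    rw [← hψ, hx]
    simp
  · intro y
    obtain ⟨w, hw, h⟩ := hsurj _ (RestrictScalars.addEquiv k A _ y).2
    refine ⟨⟨w, hw⟩, ?_⟩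
    apply (RestrictScalars.addEquiv k A _).injective
    apply Subtype.ext
    rw [hψ, h]
  · intro v x hx
    rw [hψ, hx, thetaMap_ιMulti, ExteriorAlgebra.map_apply_ιMulti]
    rfl

end
end

section
/- Let R be a commutative ring, M a finite free R-module, and φ an R-linear endomorphism of M. Then φ is injective if and only if det(φ) is a non-zero-divisor in R. -/
theorem stmt5_aux {R : Type*} [CommRing R] {ι : Type*} (r : R) :
    ∀ (k : ℕ) (v : Fin k → ι → R), LinearIndependent R v →
      (∀ e : Fin k → ι, r * (Matrix.of fun i j => v i (e j)).det = 0) → r = 0 := by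
  intro k
  induction k with
  | zero =>
    intro v _ h
    simpa using h Fin.elim0
  | succ k ih =>
    intro v hv h
    refine ih (fun i => v i.succ) (hv.comp Fin.succ (Fin.succ_injective k)) ?_
    intro e
    have key : ∑ i : Fin (k + 1), (r * ((-1) ^ (i : ℕ) *
        (Matrix.of fun a b => v (i.succAbove a) (e b)).det)) • v i = 0 := by
      funext c
      have h1 := h (Fin.cons c e)
      rw [Matrix.det_succ_column_zero, Finset.mul_sum] at h1
      rw [Finset.sum_apply, Pi.zero_apply, ← h1]
      refine Finset.sum_congr rfl fun i _ => ?_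
      have : (Matrix.of fun i j => v i ((Fin.cons c e : Fin (k + 1) → ι) j)).submatrix
          i.succAbove Fin.succ = Matrix.of fun a b => v (i.succAbove a) (e b) := by
        ext a b
        simp
      rw [this]
      simp only [Pi.smul_apply, smul_eq_mul, Matrix.of_apply, Fin.cons_zero]
      ring
    have h0 := Fintype.linearIndependent_iff.1 hv _ key 0
    simpa using h0

/-- Let `R` be a commutative ring, `M` a finite free `R`-module, and `φ` an
`R`-linear endomorphism of `M`.  Then `φ` is injective iff `det φ` is a non-zero-divisor of `R`. -/
theorem stmt5 (R : Type*) [CommRing R] (M : Type*) [AddCommGroup M] [Module R M]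
    [Module.Free R M] [Module.Finite R M] (φ : M →ₗ[R] M) :
    Function.Injective φ ↔ LinearMap.det φ ∈ nonZeroDivisors R := by
  classical
  obtain ⟨n, ⟨b⟩⟩ : ∃ n : ℕ, Nonempty (Module.Basis (Fin n) R M) :=
    ⟨_, ⟨(Module.Free.chooseBasis R M).reindex (Fintype.equivFin _)⟩⟩
  have hdet := LinearMap.det_toMatrix b φ
  constructor
  · intro hφ
    rw [mem_nonZeroDivisors_iff_right]
    intro r hr
    have hli : LinearIndependent R (fun i => b.equivFun (φ (b i))) := by
      have := (b.linearIndependent.map' φ (LinearMap.ker_eq_bot.2 hφ)).map'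
        b.equivFun.toLinearMap b.equivFun.ker
      exact this
    refine stmt5_aux r n _ hli fun e => ?_
    have : (Matrix.of fun i j => b.equivFun (φ (b i)) (e j)) =
        (LinearMap.toMatrix b b φ).transpose * (1 : Matrix (Fin n) (Fin n) R).submatrix id e := by
      ext i j
      simp [Matrix.mul_apply, Matrix.one_apply, LinearMap.toMatrix_apply]
    rw [this, Matrix.det_mul, Matrix.det_transpose, hdet, ← mul_assoc, hr, zero_mul]
  · intro h
    rw [← hdet] at h
    rw [injective_iff_map_eq_zero]
    intro x hx
    have := Matrix.eq_zero_of_det_mem_nonZeroDivisors_of_mulVec_eq_zero h (v := b.repr x)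
      (by rw [LinearMap.toMatrix_mulVec_repr, hx]; simp)
    apply b.repr.injective
    rw [map_zero]
    exact DFunLike.coe_injective this
end

section
/- Let k be a commutative ring, R a commutative k-algebra, and f0, f1 ∈ R non-zero-divisors such that R/(f0), R/(f1) and R/(f0·f1) are all finite free k-modules. Then for every g ∈ R, the determinant of multiplication by the image of g on R/(f0·f1) equals the product of the determinant of multiplication by the image of g on R/(f0) and the determinant of multiplication by the image of g on R/(f1); that is, N_{(R/(f0 f1))/k}(g) = N_{(R/(f0))/k}(g) · N_{(R/(f1))/k}(g). -/
theorem det_of_exact_aux {k A V C : Type*} [CommRing k] [AddCommGroup A] [Module k A]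
    [AddCommGroup V] [Module k V] [AddCommGroup C] [Module k C]
    [Module.Free k A] [Module.Finite k A] [Module.Finite k V] [Module.Free k C]
    (i : A →ₗ[k] V) (p : V →ₗ[k] C) (hi : Function.Injective i) (hp : Function.Surjective p)
    (hex : LinearMap.range i = LinearMap.ker p)
    (a : A →ₗ[k] A) (v : V →ₗ[k] V) (c : C →ₗ[k] C)
    (hav : ∀ x, i (a x) = v (i x)) (hvc : ∀ x, p (v x) = c (p x)) :
    LinearMap.det v = LinearMap.det a * LinearMap.det c := by
  let eA : A ≃ₗ[k] LinearMap.ker p := (LinearEquiv.ofInjective i hi).trans (LinearEquiv.ofEq _ _ hex)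
  let eC : (V ⧸ LinearMap.ker p) ≃ₗ[k] C := p.quotKerEquivOfSurjective hp
  have : Module.Free k (LinearMap.ker p) := Module.Free.of_equiv eA
  have : Module.Finite k (LinearMap.ker p) := Module.Finite.equiv eA
  have : Module.Free k (V ⧸ LinearMap.ker p) := Module.Free.of_equiv eC.symm
  have he : LinearMap.ker p ≤ (LinearMap.ker p).comap v := by
    intro x hx
    rw [LinearMap.mem_ker] at hx
    rw [Submodule.mem_comap, LinearMap.mem_ker, hvc, hx, map_zero]
  rw [LinearMap.det_eq_det_mul_det (LinearMap.ker p) v he]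
  congr 1
  · rw [← LinearMap.det_conj a eA]
    congr 1
    ext x
    obtain ⟨y, rfl⟩ := eA.surjective x
    simp only [LinearMap.comp_apply, LinearEquiv.coe_coe, LinearEquiv.symm_apply_apply]
    exact (hav y).symm
  · rw [← LinearMap.det_conj _ eC]
    congr 1
    ext x
    obtain ⟨y, rfl⟩ := hp x
    have : eC.symm (p y) = Submodule.Quotient.mk y := by
      rw [LinearEquiv.symm_apply_eq]; rfl
    simp only [LinearMap.comp_apply, LinearEquiv.coe_coe, this]
    exact hvc y

/-- Let `k` be a commutative ring, `R` a commutative `k`-algebra, and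
`f0, f1 ∈ R` non-zero-divisors such that `R/(f0)`, `R/(f1)` and `R/(f0·f1)` are all finite free
`k`-modules.  Then for every `g ∈ R`,
`N_{(R/(f0·f1))/k}(g) = N_{(R/(f0))/k}(g) · N_{(R/(f1))/k}(g)`, where the norm is the
determinant of the `k`-linear endomorphism given by multiplication by the image of `g`. -/
theorem stmt7 (k : Type*) [CommRing k] (R : Type*) [CommRing R] [Algebra k R]
    (f0 f1 : R) (h0 : f0 ∈ nonZeroDivisors R) (h1 : f1 ∈ nonZeroDivisors R)
    [Module.Free k (R ⧸ Ideal.span {f0})] [Module.Finite k (R ⧸ Ideal.span {f0})]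
    [Module.Free k (R ⧸ Ideal.span {f1})] [Module.Finite k (R ⧸ Ideal.span {f1})]
    [Module.Free k (R ⧸ Ideal.span {f0 * f1})] [Module.Finite k (R ⧸ Ideal.span {f0 * f1})]
    (g : R) :
    LinearMap.det (LinearMap.mulLeft k (Ideal.Quotient.mk (Ideal.span {f0 * f1}) g)) =
      LinearMap.det (LinearMap.mulLeft k (Ideal.Quotient.mk (Ideal.span {f0}) g)) *
        LinearMap.det (LinearMap.mulLeft k (Ideal.Quotient.mk (Ideal.span {f1}) g)) := by
  have hle : Ideal.span {f0} ≤ Submodule.comap (LinearMap.mulLeft R f1) (Ideal.span {f0 * f1}) := by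
    intro x hx
    obtain ⟨y, rfl⟩ := Ideal.mem_span_singleton'.1 hx
    exact Ideal.mem_span_singleton'.2 ⟨y, by rw [LinearMap.mulLeft_apply]; ring⟩
  have hle2 : Ideal.span {f0 * f1} ≤ Ideal.span {f1} :=
    Ideal.span_singleton_le_span_singleton.2 (Dvd.intro_left f0 rfl)
  let i : (R ⧸ Ideal.span {f0}) →ₗ[R] (R ⧸ Ideal.span {f0 * f1}) :=
    Submodule.mapQ _ _ (LinearMap.mulLeft R f1) hle
  let p : (R ⧸ Ideal.span {f0 * f1}) →ₗ[R] (R ⧸ Ideal.span {f1}) := Submodule.factor hle2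
  have hi' : ∀ x : R, i (Ideal.Quotient.mk _ x) = Ideal.Quotient.mk _ (f1 * x) := fun _ => rfl
  have hp' : ∀ x : R, p (Ideal.Quotient.mk _ x) = Ideal.Quotient.mk _ x := fun _ => rfl
  refine det_of_exact_aux (i.restrictScalars k) (p.restrictScalars k) ?_ ?_ ?_ _ _ _ ?_ ?_
  · rw [injective_iff_map_eq_zero]
    intro x hx
    obtain ⟨x, rfl⟩ := Ideal.Quotient.mk_surjective x
    rw [LinearMap.restrictScalars_apply, hi', Ideal.Quotient.eq_zero_iff_mem,
      Ideal.mem_span_singleton'] at hx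
    obtain ⟨y, hy⟩ := hx
    rw [Ideal.Quotient.eq_zero_iff_mem, Ideal.mem_span_singleton']
    refine ⟨y, ?_⟩
    rw [← mul_cancel_right_mem_nonZeroDivisors h1, mul_assoc, hy, mul_comm]
  · intro x
    obtain ⟨x, rfl⟩ := Ideal.Quotient.mk_surjective x
    exact ⟨Ideal.Quotient.mk _ x, rfl⟩
  · ext x
    obtain ⟨x, rfl⟩ := Ideal.Quotient.mk_surjective x
    rw [LinearMap.mem_ker, LinearMap.restrictScalars_apply, hp', Ideal.Quotient.eq_zero_iff_mem,
      Ideal.mem_span_singleton']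
    constructor
    · rintro ⟨y, hy⟩
      obtain ⟨y, rfl⟩ := Ideal.Quotient.mk_surjective y
      rw [LinearMap.restrictScalars_apply, hi', Ideal.Quotient.eq] at hy
      have := hle2 hy
      obtain ⟨z, hz⟩ := Ideal.mem_span_singleton'.1 this
      exact ⟨y - z, by linear_combination -hz⟩
    · rintro ⟨y, rfl⟩
      exact ⟨Ideal.Quotient.mk _ y, by rw [LinearMap.restrictScalars_apply, hi', mul_comm f1 y]⟩
  · intro x
    obtain ⟨x, rfl⟩ := Ideal.Quotient.mk_surjective x
    simp only [LinearMap.restrictScalars_apply, LinearMap.mulLeft_apply, ← map_mul, hi']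
    congr 1; ring
  · intro x
    obtain ⟨x, rfl⟩ := Ideal.Quotient.mk_surjective x
    simp only [LinearMap.restrictScalars_apply, LinearMap.mulLeft_apply, ← map_mul, hp']
end

section
/- Let A be a commutative ring, M a finitely generated A-module, and B a commutative A-algebra that is faithfully flat as an A-module. If B ⊗_A M is a free B-module of rank s, then M is a finitely generated projective A-module of constant rank s, i.e. for every prime ideal p of A the localization M_p is a free A_p-module of rank s. -/
open TensorProduct

theorem aux_flat (A : Type*) [CommRing A] (M : Type*) [AddCommGroup M] [Module A M]
    (B : Type*) [CommRing B] [Algebra A B] [Module.FaithfullyFlat A B]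
    [Module.Flat B (B ⊗[A] M)] : Module.Flat A M := by
  have : Module.Flat A (B ⊗[A] M) := Module.Flat.trans A B _
  rw [Module.Flat.iff_lTensor_preserves_injective_linearMap]
  intro N N' _ _ _ _ f hf
  rw [← Module.FaithfullyFlat.lTensor_injective_iff_injective A B]
  have h := Module.Flat.lTensor_preserves_injective_linearMap (M := B ⊗[A] M) f hf
  rw [LinearMap.lTensor_tensor] at h
  simpa using h

theorem aux_fp (A : Type*) [CommRing A] (M : Type*) [AddCommGroup M] [Module A M]
    [Module.Finite A M] (B : Type*) [CommRing B] [Algebra A B] [Module.FaithfullyFlat A B]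
    [Module.FinitePresentation B (B ⊗[A] M)] : Module.FinitePresentation A M := by
  obtain ⟨n, f, hf⟩ := Module.Finite.exists_fin' A M
  refine Module.finitePresentation_of_surjective f hf ?_
  rw [← Module.Finite.iff_fg]
  have hs : Function.Surjective (AlgebraTensorModule.lTensor B B f) :=
    LinearMap.lTensor_surjective B hf
  have hfg := Module.FinitePresentation.fg_ker _ hs
  let g := AlgebraTensorModule.lTensor B B (LinearMap.ker f).subtype
  have hg : Function.Injective g :=
    Module.Flat.lTensor_preserves_injective_linearMap _ (Submodule.subtype_injective _)
  have hr : LinearMap.range g = LinearMap.ker (AlgebraTensorModule.lTensor B B f) := by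
    have hex := lTensor_exact B (LinearMap.exact_subtype_ker_map f) hf
    ext x
    exact (hex x).symm
  have : Module.Finite B (B ⊗[A] LinearMap.ker f) := by
    rw [Module.Finite.equiv_iff (LinearEquiv.ofInjective g hg), Module.Finite.iff_fg, hr]
    exact hfg
  exact Module.Finite.of_finite_tensorProduct_of_faithfullyFlat B

/-- Let `A` be a commutative ring, `M` a finitely generated `A`-module, and
`B` a commutative `A`-algebra that is faithfully flat as an `A`-module.  If `B ⊗_A M` is a free
`B`-module of rank `s`, then `M` is a finitely generated projective `A`-module of constant rank
`s`: for every prime ideal `p` of `A`, the localization `M_p` is a free `A_p`-module of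
rank `s`. -/
theorem stmt10 (A : Type*) [CommRing A] (M : Type*) [AddCommGroup M] [Module A M]
    [Module.Finite A M] (B : Type*) [CommRing B] [Algebra A B] [Module.FaithfullyFlat A B]
    (s : ℕ) (hfree : Nonempty ((B ⊗[A] M) ≃ₗ[B] (Fin s → B))) :
    Module.Projective A M ∧
      ∀ (p : Ideal A) [p.IsPrime],
        Nonempty (LocalizedModule p.primeCompl M ≃ₗ[Localization p.primeCompl]
          (Fin s → Localization p.primeCompl)) := by
  obtain ⟨e⟩ := hfree
  have : Module.Free B (B ⊗[A] M) := Module.Free.of_equiv e.symm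
  have : Module.FinitePresentation B (B ⊗[A] M) := Module.finitePresentation_of_projective _ _
  have hflat : Module.Flat A M := aux_flat A M B
  have hfp : Module.FinitePresentation A M := aux_fp A M B
  refine ⟨Module.Flat.projective_of_finitePresentation, fun p hp => ?_⟩
  have : Module.Free (Localization.AtPrime p) (LocalizedModule p.primeCompl M) :=
    Module.free_of_flat_of_isLocalRing
  obtain ⟨q, hq⟩ := PrimeSpectrum.comap_surjective_of_faithfullyFlat (A := A) (B := B) ⟨p, hp⟩
  have : Nontrivial B := ⟨⟨0, 1, fun h => q.2.ne_top ((Ideal.eq_top_iff_one _).2 (h ▸ zero_mem _))⟩⟩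
  have h1 := Module.rankAtStalk_baseChange (R := A) (M := M) q
  rw [hq, Module.rankAtStalk_eq_of_equiv e, Module.rankAtStalk_eq_finrank_of_free] at h1
  have h2 : Module.finrank (Localization.AtPrime p) (LocalizedModule p.primeCompl M) = s := by
    simpa [Module.rankAtStalk] using h1.symm
  exact ⟨(Module.finBasisOfFinrankEq _ _ h2).equivFun⟩
end

section
/- Let k be a commutative ring, A a commutative k-algebra, and J an ideal of A such that A is J-adically complete and separated (A ≅ lim_m A/J^m). Let M be a finitely generated A-module that is J-adically complete and separated (M ≅ lim_m M/J^m M). Let k' be a commutative k-algebra that is faithfully flat as a k-module, and put A' = k' ⊗_k A and M' = k' ⊗_k M, regarded as a module over A'. If M' is a free A'-module of rank s, then M is a projective A-module of constant rank s (its localization at every prime of A is free of rank s). -/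
open TensorProduct

attribute [local instance] Algebra.TensorProduct.rightAlgebra

lemma stmt11_finitePresentation_descent (R S M : Type*) [CommRing R] [CommRing S] [Algebra R S]
    [Module.FaithfullyFlat R S] [AddCommGroup M] [Module R M] [Module.Finite R M]
    [Module.FinitePresentation S (S ⊗[R] M)] : Module.FinitePresentation R M := by
  obtain ⟨n, f, hf⟩ := Module.Finite.exists_fin' R M
  refine Module.finitePresentation_of_surjective f hf ?_
  have hs : Function.Surjective (AlgebraTensorModule.lTensor S S f) :=
    LinearMap.lTensor_surjective S hf
  have hk := Module.FinitePresentation.fg_ker (AlgebraTensorModule.lTensor S S f) hs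
  rw [← Module.Finite.iff_fg] at hk ⊢
  have : Module.Finite S (S ⊗[R] (LinearMap.ker f)) :=
    Module.Finite.equiv (LinearMap.tensorKerEquiv S S f).symm
  exact Module.Finite.of_finite_tensorProduct_of_faithfullyFlat S

/-- Let `k` be a commutative ring, `A` a commutative `k`-algebra, and `J` an
ideal of `A` such that `A` is `J`-adically complete and separated.  Let `M` be a finitely
generated `A`-module that is `J`-adically complete and separated.  Let `k'` be a faithfully
flat commutative `k`-algebra, and put `A' = k' ⊗_k A` and `M' = k' ⊗_k M ≅ A' ⊗_A M`, regarded
as an `A'`-module.  If `M'` is a free `A'`-module of rank `s`, then `M` is a projective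
`A`-module of constant rank `s` (its localization at every prime of `A` is free of
rank `s`). -/
theorem stmt11 (k : Type*) [CommRing k] (A : Type*) [CommRing A] [Algebra k A]
    (J : Ideal A) [IsAdicComplete J A]
    (M : Type*) [AddCommGroup M] [Module A M] [Module.Finite A M] [IsAdicComplete J M]
    (k' : Type*) [CommRing k'] [Algebra k k'] [Module.FaithfullyFlat k k']
    (s : ℕ)
    (hfree : Nonempty (((k' ⊗[k] A) ⊗[A] M) ≃ₗ[k' ⊗[k] A] (Fin s → (k' ⊗[k] A)))) :
    Module.Projective A M ∧
      ∀ (p : Ideal A) [p.IsPrime],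
        Nonempty (LocalizedModule p.primeCompl M ≃ₗ[Localization p.primeCompl]
          (Fin s → Localization p.primeCompl)) := by
  obtain ⟨e⟩ := hfree
  have hff : Module.FaithfullyFlat A (k' ⊗[k] A) :=
    .of_linearEquiv _ _ (Algebra.TensorProduct.commRight _ _ _).symm.toLinearEquiv
  have hfp' : Module.FinitePresentation (k' ⊗[k] A) ((k' ⊗[k] A) ⊗[A] M) :=
    Module.FinitePresentation.of_equiv e.symm
  have hfl' : Module.Flat (k' ⊗[k] A) ((k' ⊗[k] A) ⊗[A] M) := Module.Flat.of_linearEquiv e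
  have hfp : Module.FinitePresentation A M :=
    stmt11_finitePresentation_descent A (k' ⊗[k] A) M
  have hfl : Module.Flat A M := Module.Flat.of_flat_tensorProduct A M (k' ⊗[k] A)
  refine ⟨Module.Flat.projective_of_finitePresentation, fun p hp => ?_⟩
  obtain ⟨q, hq⟩ := PrimeSpectrum.comap_surjective_of_faithfullyFlat
    (A := A) (B := k' ⊗[k] A) ⟨p, hp⟩
  have hnt : Nontrivial (k' ⊗[k] A) := q.nontrivial
  have hr := Module.rankAtStalk_baseChange (R := A) (M := M) q
  rw [hq, Module.rankAtStalk_eq_of_equiv e, Module.rankAtStalk_eq_finrank_of_free] at hr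
  have hr' : Module.finrank (Localization p.primeCompl) (LocalizedModule p.primeCompl M) = s := by
    simpa [Module.rankAtStalk] using hr.symm
  have : IsLocalRing (Localization p.primeCompl) :=
    inferInstanceAs (IsLocalRing (Localization.AtPrime p))
  have : Module.Free (Localization p.primeCompl) (LocalizedModule p.primeCompl M) :=
    Module.free_of_flat_of_isLocalRing
  exact ⟨(Module.finBasisOfFinrankEq _ _ hr').equivFun⟩
end

section
/- Let A → B → C be homomorphisms of commutative rings (so C is a B-algebra and an A-algebra compatibly). Suppose C is a finitely generated projective B-module of constant rank m with m > 0, and also a finitely generated projective A-module of constant rank n·m with n·m > 0. Then B is a finitely generated projective A-module of constant rank n. -/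
open TensorProduct in
theorem aux_retract_s12 (B C : Type*) [CommRing B] [CommRing C] [Algebra B C]
    [Module.Finite B C] [Module.Projective B C]
    (h : ∀ (q : Ideal B) [q.IsPrime], Nontrivial (LocalizedModule q.primeCompl C)) :
    ∃ r : C →ₗ[B] B, r 1 = 1 := by
  let I : Ideal B := LinearMap.range (Module.Dual.eval B C 1)
  have hmem (f : C →ₗ[B] B) (c : C) : f c ∈ I :=
    ⟨f ∘ₗ LinearMap.mulLeft B c, by simp [Module.Dual.eval]⟩
  suffices hI : I = ⊤ by
    obtain ⟨r, hr⟩ : (1 : B) ∈ I := hI ▸ Submodule.mem_top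
    exact ⟨r, hr⟩
  by_contra hne
  obtain ⟨q, hq, hIq⟩ := Ideal.exists_le_maximal I hne
  obtain ⟨s, hs⟩ := (Module.projective_def (R := B) (P := C)).1 inferInstance
  have hle : (⊤ : Submodule B C) ≤ I • ⊤ := by
    intro c _
    rw [← hs c, Finsupp.linearCombination_apply]
    refine Submodule.sum_mem _ fun x _ => ?_
    exact Submodule.smul_mem_smul (hmem (Finsupp.lapply x ∘ₗ s) c) trivial
  obtain ⟨r, hr, hr0⟩ :=
    Submodule.exists_sub_one_mem_and_smul_eq_zero_of_fg_of_le_smul I ⊤ Module.Finite.fg_top hle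
  have hrq : r ∉ q := fun hrq => hq.ne_top <| q.eq_top_iff_one.2 <| by
    simpa using q.sub_mem hrq (hIq hr)
  have := h q
  have hs : Subsingleton (LocalizedModule q.primeCompl C) := by
    rw [LocalizedModule.subsingleton_iff]
    exact fun m => ⟨r, hrq, hr0 m trivial⟩
  exact not_subsingleton _ hs

attribute [local instance] Algebra.TensorProduct.rightAlgebra in
open TensorProduct in
theorem aux_rank (A B C : Type*) [CommRing A] [CommRing B] [CommRing C]
    [Algebra A B] [Algebra B C] [Algebra A C] [IsScalarTower A B C]
    [Module.Finite B C] [Module.Projective B C] [Module.Finite A C] [Module.Projective A C]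
    [Module.Finite A B] [Module.Projective A B] (m : ℕ)
    (h : ∀ q, Module.rankAtStalk (R := B) C q = m) (p : PrimeSpectrum A) :
    Module.rankAtStalk (R := A) C p = Module.rankAtStalk (R := A) B p * m := by
  let k := p.asIdeal.ResidueField
  let D := k ⊗[A] B
  have : IsArtinianRing D := IsArtinianRing.of_finite k D
  have hb : Nonempty (Module.Basis (Fin m) D (D ⊗[B] C)) := by
    apply Module.nonempty_basis_of_flat_of_finrank_eq
    intro P
    let := Ideal.Quotient.field P.1
    have h1 := Module.rankAtStalk_baseChange (R := D) (M := D ⊗[B] C) (S := D ⧸ P.1) ⊥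
    rw [Module.rankAtStalk_eq_finrank_of_free, Module.rankAtStalk_baseChange (R := B) (S := D), h] at h1
    simpa using h1
  obtain ⟨b⟩ := hb
  have : Module.Free D (D ⊗[B] C) := .of_basis b
  by_cases hD : Nontrivial D
  · have h2 : Module.finrank D (D ⊗[B] C) = m := by
      simpa using Module.finrank_eq_card_basis b
    rw [Module.rankAtStalk_eq, Module.rankAtStalk_eq, ← h2]
    have e := Algebra.IsPushout.cancelBaseChange A k B D C
    change Module.finrank k (k ⊗[A] C) = Module.finrank k D * _
    rw [← e.finrank_eq, Module.finrank_mul_finrank]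
  · rw [not_nontrivial_iff_subsingleton] at hD
    have e := Algebra.IsPushout.cancelBaseChange A k B D C
    rw [Module.rankAtStalk_eq, Module.rankAtStalk_eq]
    change Module.finrank k (k ⊗[A] C) = Module.finrank k D * _
    have : Subsingleton (D ⊗[B] C) := Module.subsingleton D _
    rw [← e.finrank_eq, Module.finrank_zero_of_subsingleton, Module.finrank_zero_of_subsingleton,
      zero_mul]


/-- Let `A → B → C` be homomorphisms of commutative rings.  Suppose `C` is a
finitely generated projective `B`-module of constant rank `m > 0`, and also a finitely
generated projective `A`-module of constant rank `n·m > 0`.  Then `B` is a finitely generated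
projective `A`-module of constant rank `n`. -/
theorem stmt12 (A B C : Type*) [CommRing A] [CommRing B] [CommRing C]
    [Algebra A B] [Algebra B C] [Algebra A C] [IsScalarTower A B C]
    (n m : ℕ) (hm : 0 < m) (hnm : 0 < n * m)
    [Module.Finite B C] [Module.Projective B C]
    (hrkB : ∀ (q : Ideal B) [q.IsPrime],
      Nonempty (LocalizedModule q.primeCompl C ≃ₗ[Localization q.primeCompl]
        (Fin m → Localization q.primeCompl)))
    [Module.Finite A C] [Module.Projective A C]
    (hrkA : ∀ (p : Ideal A) [p.IsPrime],
      Nonempty (LocalizedModule p.primeCompl C ≃ₗ[Localization p.primeCompl]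
        (Fin (n * m) → Localization p.primeCompl))) :
    Module.Finite A B ∧ Module.Projective A B ∧
      ∀ (p : Ideal A) [p.IsPrime],
        Nonempty (LocalizedModule p.primeCompl B ≃ₗ[Localization p.primeCompl]
          (Fin n → Localization p.primeCompl)) := by
  have ntB (q : Ideal B) [q.IsPrime] : Nontrivial (LocalizedModule q.primeCompl C) := by
    obtain ⟨e⟩ := hrkB q
    have : Nonempty (Fin m) := ⟨⟨0, hm⟩⟩
    have : Nontrivial (Localization q.primeCompl) :=
      inferInstanceAs (Nontrivial (Localization.AtPrime q))
    exact e.toEquiv.nontrivial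
  obtain ⟨r, hr⟩ := aux_retract_s12 B C ntB
  have hcomp : (r.restrictScalars A) ∘ₗ (IsScalarTower.toAlgHom A B C).toLinearMap =
      LinearMap.id := by
    ext b
    have : algebraMap B C b = b • 1 := Algebra.algebraMap_eq_smul_one b
    simp [this, hr]
  have hP : Module.Projective A B := Module.Projective.of_split _ _ hcomp
  have hF : Module.Finite A B := Module.Finite.of_surjective (r.restrictScalars A)
    fun b => ⟨_, LinearMap.congr_fun hcomp b⟩
  refine ⟨hF, hP, fun p hp => ?_⟩
  have hB (q : PrimeSpectrum B) : Module.rankAtStalk (R := B) C q = m := by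
    obtain ⟨e⟩ := hrkB q.asIdeal
    have := e.finrank_eq
    have : Nontrivial (Localization q.asIdeal.primeCompl) :=
      inferInstanceAs (Nontrivial (Localization.AtPrime q.asIdeal))
    rw [Module.finrank_fin_fun] at *
    assumption
  have hA : Module.rankAtStalk (R := A) C ⟨p, hp⟩ = n * m := by
    obtain ⟨e⟩ := hrkA p
    have := e.finrank_eq
    have : Nontrivial (Localization p.primeCompl) :=
      inferInstanceAs (Nontrivial (Localization.AtPrime p))
    rw [Module.finrank_fin_fun] at *
    assumption
  rw [aux_rank A B C m hB] at hA
  have hn : Module.rankAtStalk (R := A) B ⟨p, hp⟩ = n := Nat.eq_of_mul_eq_mul_right hm hA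
  have : Module.Free (Localization.AtPrime p) (LocalizedModule p.primeCompl B) :=
    Module.free_of_flat_of_isLocalRing
  exact ⟨(Module.finBasisOfFinrankEq (Localization.AtPrime p)
    (LocalizedModule p.primeCompl B) hn).equivFun⟩
end

section
/- Let A be a commutative ring with an action of a finite group G by ring automorphisms, and let J be a G-stable ideal of A (g·J = J for all g ∈ G). Write J^G = {a ∈ J : g·a = a for all g ∈ G} and let A·J^G denote the ideal of A generated by J^G. Then: (i) for every a ∈ J one has a^{|G|} ∈ A·J^G; (ii) if J is finitely generated, then there exists s ≥ 1 with J^s ⊆ A·J^G. -/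
/-- Let `A` be a commutative ring with an action of a finite group `G` by ring
automorphisms, and let `J` be a `G`-stable ideal of `A`.  Write `J^G` for the set of `G`-fixed
elements of `J` and `A·J^G` for the ideal of `A` it generates.  Then:
(i) for every `a ∈ J` one has `a^{|G|} ∈ A·J^G`;
(ii) if `J` is finitely generated, then there exists `s ≥ 1` with `J^s ⊆ A·J^G`. -/
theorem stmt13 (A : Type*) [CommRing A] (G : Type*) [Group G] [Finite G]
    [MulSemiringAction G A] (J : Ideal A) (hJ : ∀ g : G, ∀ a ∈ J, g • a ∈ J) :
    (∀ a ∈ J, a ^ Nat.card G ∈ Ideal.span {x : A | x ∈ J ∧ ∀ g : G, g • x = x}) ∧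
      (J.FG → ∃ s : ℕ, 1 ≤ s ∧
        J ^ s ≤ Ideal.span {x : A | x ∈ J ∧ ∀ g : G, g • x = x}) := by
  have key : ∀ a ∈ J, a ^ Nat.card G ∈ Ideal.span {x : A | x ∈ J ∧ ∀ g : G, g • x = x} := by
    intro a ha
    have := Fintype.ofFinite G
    have hfix : ∀ (g : G) (n : ℕ), g • (∏ h : G, (Polynomial.X - Polynomial.C (h • a))).coeff n =
        (∏ h : G, (Polynomial.X - Polynomial.C (h • a))).coeff n := by
      intro g n
      rw [← Polynomial.coeff_smul, Finset.smul_prod']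
      congr 1
      simp only [smul_sub, Polynomial.smul_X, Polynomial.smul_C, smul_smul]
      exact Fintype.prod_equiv (Equiv.mulLeft g) _ _ (fun _ => rfl)
    have hmap : (∏ h : G, (Polynomial.X - Polynomial.C (h • a))).map (Ideal.Quotient.mk J) =
        Polynomial.X ^ Nat.card G := by
      rw [Polynomial.map_prod]
      simp [Ideal.Quotient.eq_zero_iff_mem.mpr (hJ _ a ha), Nat.card_eq_fintype_card]
    have hmonic : (∏ h : G, (Polynomial.X - Polynomial.C (h • a))).Monic :=
      Polynomial.monic_prod_of_monic _ _ (fun _ _ => Polynomial.monic_X_sub_C _)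
    have hdeg : (∏ h : G, (Polynomial.X - Polynomial.C (h • a))).natDegree ≤ Nat.card G := by
      refine (Polynomial.natDegree_prod_le _ _).trans ?_
      rw [Nat.card_eq_fintype_card, ← Finset.card_univ, Finset.card_eq_sum_ones]
      exact Finset.sum_le_sum fun _ _ => Polynomial.natDegree_X_sub_C_le _
    have heval : (∏ h : G, (Polynomial.X - Polynomial.C (h • a))).eval a = 0 := by
      rw [Polynomial.eval_prod]
      exact Finset.prod_eq_zero (Finset.mem_univ 1) (by simp)
    generalize (∏ h : G, (Polynomial.X - Polynomial.C (h • a))) = p at *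
    have hco : ∀ n, n < p.natDegree →
        p.coeff n ∈ Ideal.span {x : A | x ∈ J ∧ ∀ g : G, g • x = x} := by
      intro n hn
      refine Ideal.subset_span ⟨?_, fun g => hfix g n⟩
      rw [← Ideal.Quotient.eq_zero_iff_mem, ← Polynomial.coeff_map, hmap,
        Polynomial.coeff_X_pow, if_neg (by omega)]
    have h1 : a ^ p.natDegree ∈ Ideal.span {x : A | x ∈ J ∧ ∀ g : G, g • x = x} := by
      rw [Polynomial.eval_eq_sum_range, Finset.sum_range_succ, hmonic.coeff_natDegree,
        one_mul] at heval
      rw [eq_neg_of_add_eq_zero_right heval]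
      exact neg_mem (Ideal.sum_mem _ fun i hi =>
        Ideal.mul_mem_right _ _ (hco i (Finset.mem_range.mp hi)))
    exact Ideal.pow_mem_of_pow_mem _ h1 hdeg
  refine ⟨key, fun hfg => ?_⟩
  obtain ⟨k, hk⟩ := Ideal.exists_pow_le_of_le_radical_of_fg
    (fun a ha => ⟨_, key a ha⟩ : J ≤ (Ideal.span {x : A | x ∈ J ∧ ∀ g : G, g • x = x}).radical) hfg
  exact ⟨k + 1, by omega, (Ideal.pow_le_pow_right (Nat.le_succ k)).trans hk⟩
end

section
/- Let q ∈ k[x] be monic of degree n ≥ 1 and let p ∈ k[x] be arbitrary. Write the remainder of p upon division by q as ∑_{i<n} b_i x^i. Then q(t^{-1}) is a unit of k((t)) and the coefficient of t^1 in p(t^{-1}) · q(t^{-1})^{-1} equals b_{n−1}; that is, res((p/q) dx) = b_{n−1}. -/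
theorem aux_poly (k : Type*) [CommRing k] (g : Polynomial k) :
    Polynomial.aeval (HahnSeries.single (1 : ℤ) (1 : k) : LaurentSeries k) g =
      HahnSeries.ofPowerSeries ℤ k (g : PowerSeries k) := by
  induction g using Polynomial.induction_on' with
  | add p q hp hq => simp [hp, hq]
  | monomial n a =>
    rw [← Polynomial.C_mul_X_pow_eq_monomial]
    simp only [map_mul, map_pow, Polynomial.aeval_X, Polynomial.aeval_C, Polynomial.coe_mul,
      Polynomial.coe_C, Polynomial.coe_pow, Polynomial.coe_X, HahnSeries.ofPowerSeries_X,
      HahnSeries.ofPowerSeries_C]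
    congr 1
    first
      | (rw [HahnSeries.algebraMap_apply]; rfl)
      | simp [HahnSeries.algebraMap_apply']
      | simp [LaurentSeries.coe_algebraMap]

theorem aux_reflect (k : Type*) [CommRing k] (f : Polynomial k) (N : ℕ) (hf : f.natDegree ≤ N) :
    Polynomial.aeval (HahnSeries.single (-1 : ℤ) (1 : k) : LaurentSeries k) f =
      HahnSeries.single (-(N : ℤ)) (1 : k) *
        HahnSeries.ofPowerSeries ℤ k ((f.reflect N : Polynomial k) : PowerSeries k) := by
  letI : Invertible (HahnSeries.single (-1 : ℤ) (1 : k) : LaurentSeries k) :=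
    ⟨HahnSeries.single (1 : ℤ) (1 : k), by simp [HahnSeries.single_mul_single],
      by simp [HahnSeries.single_mul_single]⟩
  have h := Polynomial.eval₂_reflect_mul_pow (algebraMap k (LaurentSeries k))
    (HahnSeries.single (-1 : ℤ) (1 : k) : LaurentSeries k) N f hf
  rw [Polynomial.aeval_def, ← h, ← aux_poly, Polynomial.aeval_def, mul_comm, HahnSeries.single_pow]
  simp only [one_pow, smul_neg, nsmul_eq_mul, mul_one]
  rfl

theorem aux_coeff (k : Type*) [CommRing k] (N : ℤ) (F : PowerSeries k) (m : ℕ) :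
    (HahnSeries.single N (1 : k) * HahnSeries.ofPowerSeries ℤ k F : LaurentSeries k).coeff (m + N) =
      PowerSeries.coeff m F := by
  rw [HahnSeries.coeff_single_mul_add, one_mul]
  exact HahnSeries.ofPowerSeries_apply_coeff F m


/-- Let `q ∈ k[x]` be monic of degree `n ≥ 1` and let `p ∈ k[x]` be
arbitrary.  Write the remainder of `p` upon division by `q` as `∑_{i<n} b_i x^i`.  Then
`q(t⁻¹)` is a unit of the Laurent series ring `k((t))` and the coefficient of `t^1` in
`p(t⁻¹)·q(t⁻¹)⁻¹` equals `b_{n−1}`; that is, `res((p/q) dx) = b_{n−1}`. -/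
theorem stmt15 (k : Type*) [CommRing k] (q p : Polynomial k)
    (hq : q.Monic) (hn : 1 ≤ q.natDegree) :
    IsUnit (Polynomial.aeval (HahnSeries.single (-1 : ℤ) (1 : k) : LaurentSeries k) q) ∧
      ((Polynomial.aeval (HahnSeries.single (-1 : ℤ) (1 : k) : LaurentSeries k) p) *
          Ring.inverse
            (Polynomial.aeval (HahnSeries.single (-1 : ℤ) (1 : k) : LaurentSeries k) q)).coeff
          (1 : ℤ) =
        (p %ₘ q).coeff (q.natDegree - 1) := by

  set x : LaurentSeries k := HahnSeries.single (-1 : ℤ) (1 : k) with hx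
  set n := q.natDegree with hn'
  have hQ := aux_reflect k q n le_rfl
  set Q : PowerSeries k := ((q.reflect n : Polynomial k) : PowerSeries k) with hQdef
  have hQ0 : PowerSeries.constantCoeff Q = 1 := by
    rw [← PowerSeries.coeff_zero_eq_constantCoeff_apply, hQdef, Polynomial.coeff_coe,
      Polynomial.coeff_reflect, Polynomial.revAt_le (Nat.zero_le _)]
    rw [Nat.sub_zero]; exact hq.coeff_natDegree
  have hQu : IsUnit Q := by
    rw [PowerSeries.isUnit_iff_constantCoeff, hQ0]; exact isUnit_one
  obtain ⟨V, hV⟩ := hQu.exists_right_inv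
  have hV0 : PowerSeries.constantCoeff V = 1 := by
    have := congrArg (PowerSeries.constantCoeff (R := k)) hV
    simpa [hQ0] using this
  set I : LaurentSeries k := HahnSeries.single (n : ℤ) (1 : k) * HahnSeries.ofPowerSeries ℤ k V
    with hI
  have hss : (HahnSeries.single (-(n : ℤ)) (1 : k) * HahnSeries.single (n : ℤ) (1 : k) :
      LaurentSeries k) = 1 := by
    rw [HahnSeries.single_mul_single]; simp
  have hqI : Polynomial.aeval x q * I = 1 := by
    rw [hQ, hI, mul_mul_mul_comm, hss, ← map_mul, hV]; simp
  have hu : IsUnit (Polynomial.aeval x q) := IsUnit.of_mul_eq_one _ hqI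
  refine ⟨hu, ?_⟩
  have hinv : Ring.inverse (Polynomial.aeval x q) = I := by
    calc Ring.inverse (Polynomial.aeval x q)
        = Ring.inverse (Polynomial.aeval x q) * (Polynomial.aeval x q * I) := by rw [hqI, mul_one]
      _ = I := by rw [← mul_assoc, Ring.inverse_mul_cancel _ hu, one_mul]
  rw [hinv]
  have hr : (p %ₘ q).natDegree ≤ n - 1 := by
    have := Polynomial.natDegree_modByMonic_lt p hq (by rintro rfl; simp [hn'] at hn)
    omega
  have hR := aux_reflect k (p %ₘ q) (n - 1) hr
  set R : PowerSeries k := (((p %ₘ q).reflect (n - 1) : Polynomial k) : PowerSeries k) with hRdef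
  have hD := aux_reflect k (p /ₘ q) _ le_rfl
  have hp : Polynomial.aeval x p * I = Polynomial.aeval x (p %ₘ q) * I +
      Polynomial.aeval x (p /ₘ q) := by
    conv_lhs => rw [← Polynomial.modByMonic_add_div p q]
    rw [map_add, map_mul, add_mul, mul_right_comm, hqI, one_mul]
  have h1 : Polynomial.aeval x (p %ₘ q) * I =
      HahnSeries.single (1 : ℤ) (1 : k) * HahnSeries.ofPowerSeries ℤ k (R * V) := by
    rw [hR, hI, mul_mul_mul_comm, HahnSeries.single_mul_single, ← map_mul, mul_one]
    rw [show -((n - 1 : ℕ) : ℤ) + (n : ℤ) = 1 by omega]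
  have h2 : (Polynomial.aeval x (p /ₘ q)).coeff 1 = 0 := by
    rw [hD]
    have := aux_coeff k (-((p /ₘ q).natDegree : ℤ))
      (((p /ₘ q).reflect (p /ₘ q).natDegree : Polynomial k) : PowerSeries k)
      ((p /ₘ q).natDegree + 1)
    rw [show (((p /ₘ q).natDegree + 1 : ℕ) : ℤ) + -((p /ₘ q).natDegree : ℤ) = 1 by
      push_cast; ring] at this
    rw [this, Polynomial.coeff_coe, Polynomial.coeff_reflect,
      Polynomial.revAt_eq_self_of_lt (Nat.lt_succ_self _)]
    exact Polynomial.coeff_eq_zero_of_natDegree_lt (Nat.lt_succ_self _)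
  have h3 := aux_coeff k 1 (R * V) 0
  rw [Nat.cast_zero, zero_add] at h3
  rw [hp, HahnSeries.coeff_add, h2, add_zero, h1, h3, PowerSeries.coeff_zero_eq_constantCoeff_apply,
    map_mul, hV0, mul_one, ← PowerSeries.coeff_zero_eq_constantCoeff_apply, hRdef,
    Polynomial.coeff_coe, Polynomial.coeff_reflect, Polynomial.revAt_le (Nat.zero_le _),
    Nat.sub_zero]
end

section
/- Let f ∈ k[x] be monic of degree n ≥ 1 and let g ∈ k[x]. Then f(t^{-1}) is a unit of k((t)) and the coefficient of t^1 in g(t^{-1}) · f'(t^{-1}) · f(t^{-1})^{-1} equals the trace of the k-linear endomorphism 'multiplication by the image of g' of the finite free k-algebra k[x]/(f); that is, res((g/f) df) = trace_{(k[x]/(f))/k}(g). In particular, taking g = 1, res(f'(x) dx / f(x)) = n. -/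
theorem aux_algebraMap {k : Type*} [CommRing k] (a : k) :
    algebraMap k (LaurentSeries k) a = HahnSeries.C a := by
  rw [HahnSeries.algebraMap_apply', PowerSeries.algebraMap_apply, HahnSeries.ofPowerSeries_C]
  rfl

open Polynomial in
theorem aux_coeff_s16 {k : Type*} [CommRing k] (p : k[X]) (z : ℤ) :
    (aeval (HahnSeries.single (-1 : ℤ) (1 : k) : LaurentSeries k) p).coeff z =
      if z ≤ 0 then p.coeff (-z).toNat else 0 := by
  induction p using Polynomial.induction_on' with
  | add p q hp hq =>
    rw [map_add, HahnSeries.coeff_add, hp, hq]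
    split_ifs <;> simp
  | monomial m a =>
    rw [aeval_monomial, HahnSeries.single_pow, aux_algebraMap, HahnSeries.C_mul_eq_smul,
      HahnSeries.coeff_smul, HahnSeries.coeff_single, coeff_monomial]
    by_cases h : z = -(m : ℤ)
    · subst h
      simp
    · have h1 : ¬ (z = m • (-1 : ℤ)) := by simpa using h
      rw [if_neg h1]
      by_cases hz : z ≤ 0
      · have h2 : ¬ (m = (-z).toNat) := by omega
        rw [if_pos hz, if_neg h2]; simp
      · rw [if_neg hz]; simp

/-- Vanishing of coefficients below `m`. -/
def AuxV {k : Type*} [CommRing k] (m : ℤ) (F : LaurentSeries k) : Prop :=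
  ∀ z < m, F.coeff z = 0

theorem AuxV.mul {k : Type*} [CommRing k] {m l : ℤ} {F G : LaurentSeries k}
    (hF : AuxV m F) (hG : AuxV l G) : AuxV (m + l) (F * G) := by
  intro z hz
  rw [HahnSeries.coeff_mul]
  apply Finset.sum_eq_zero
  rintro ⟨a, b⟩ hab
  rw [Finset.mem_antidiagonal] at hab
  obtain ⟨-, -, hab⟩ := hab
  simp only at hab ⊢
  by_cases ha : a < m
  · rw [hF a ha, zero_mul]
  · rw [hG b (by omega), mul_zero]

theorem AuxV.single {k : Type*} [CommRing k] (m : ℤ) :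
    AuxV m (HahnSeries.single m (1 : k) : LaurentSeries k) := by
  intro z hz
  exact HahnSeries.coeff_single_of_ne hz.ne

theorem AuxV.ofPS {k : Type*} [CommRing k] (P : PowerSeries k) :
    AuxV 0 (HahnSeries.ofPowerSeries ℤ k P) := by
  intro z hz
  rw [PowerSeries.coeff_coe, if_pos hz]

open Polynomial in
theorem AuxV.poly {k : Type*} [CommRing k] (p : k[X]) (m : ℤ)
    (h : ∀ j : ℕ, m < j → p.coeff j = 0) :
    AuxV (-m) (aeval (HahnSeries.single (-1 : ℤ) (1 : k) : LaurentSeries k) p) := by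
  intro z hz
  rw [aux_coeff_s16]
  split_ifs with h0
  · exact h _ (by omega)
  · rfl

open Polynomial in
theorem aux_unit {k : Type*} [CommRing k] (f : k[X]) (hf : f.Monic) :
    ∃ I : LaurentSeries k, AuxV f.natDegree I ∧
      aeval (HahnSeries.single (-1 : ℤ) (1 : k) : LaurentSeries k) f * I = 1 := by
  have h1 : (HahnSeries.single (1 : ℤ) (1 : k) : LaurentSeries k) *
      HahnSeries.single (-1 : ℤ) (1 : k) = 1 := by
    rw [HahnSeries.single_mul_single]; simp
  let _ : Invertible (HahnSeries.single (-1 : ℤ) (1 : k) : LaurentSeries k) :=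
    ⟨HahnSeries.single (1 : ℤ) (1 : k), h1, by rw [mul_comm, h1]⟩
  have h2 := eval₂_reverse_mul_pow (algebraMap k (LaurentSeries k))
    (HahnSeries.single (-1 : ℤ) (1 : k) : LaurentSeries k) f
  have h3 : eval₂ (algebraMap k (LaurentSeries k))
      (⅟(HahnSeries.single (-1 : ℤ) (1 : k) : LaurentSeries k)) f.reverse =
      HahnSeries.ofPowerSeries ℤ k (f.reverse : PowerSeries k) := by
    change eval₂ (algebraMap k (LaurentSeries k))
      (HahnSeries.single (1 : ℤ) (1 : k) : LaurentSeries k) f.reverse = _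
    induction f.reverse using Polynomial.induction_on' with
    | add p q hp hq => rw [eval₂_add, hp, hq, Polynomial.coe_add, map_add]
    | monomial m a =>
      rw [← C_mul_X_pow_eq_monomial, Polynomial.coe_mul, Polynomial.coe_pow, Polynomial.coe_C,
        Polynomial.coe_X, map_mul, map_pow, HahnSeries.ofPowerSeries_X, HahnSeries.ofPowerSeries_C,
        eval₂_mul, eval₂_pow, eval₂_X, eval₂_C, aux_algebraMap]
  have h4 : IsUnit (f.reverse : PowerSeries k) := by
    rw [PowerSeries.isUnit_iff_constantCoeff]
    simp [hf.leadingCoeff]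
  obtain ⟨Q, hQ⟩ := h4.exists_right_inv
  refine ⟨HahnSeries.single (f.natDegree : ℤ) (1 : k) * HahnSeries.ofPowerSeries ℤ k Q, ?_, ?_⟩
  · simpa using (AuxV.single (k := k) (f.natDegree : ℤ)).mul (AuxV.ofPS Q)
  · rw [aeval_def, ← h2, h3]
    have h5 : (HahnSeries.single (-1 : ℤ) (1 : k) : LaurentSeries k) ^ f.natDegree *
        HahnSeries.single (f.natDegree : ℤ) (1 : k) = 1 := by
      rw [HahnSeries.single_pow, HahnSeries.single_mul_single]; simp
    have h6 := congrArg (HahnSeries.ofPowerSeries ℤ k) hQ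
    rw [map_mul, map_one] at h6
    linear_combination (HahnSeries.ofPowerSeries ℤ k (f.reverse : PowerSeries k)) *
      HahnSeries.ofPowerSeries ℤ k Q * h5 + h6

open Polynomial in
/-- Horner shifts of `f`. -/
noncomputable def auxB {k : Type*} [CommRing k] (f : k[X]) (i : ℕ) : k[X] :=
  ∑ j ∈ Finset.range (f.natDegree + 1), if i < j then C (f.coeff j) * X ^ (j - 1 - i) else 0

open Polynomial in
theorem auxB_coeff {k : Type*} [CommRing k] (f : k[X]) (i : ℕ) (j : ℕ) (hj : i < j) :
    (f - X ^ (i + 1) * auxB f i).coeff j = 0 := by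
  have h : X ^ (i + 1) * auxB f i =
      ∑ j ∈ Finset.range (f.natDegree + 1), if i < j then C (f.coeff j) * X ^ j else 0 := by
    rw [auxB, Finset.mul_sum]
    refine Finset.sum_congr rfl fun l _ => ?_
    split_ifs with hl
    · rw [mul_left_comm, ← pow_add]
      congr 2
      omega
    · simp
  have h' : f - X ^ (i + 1) * auxB f i =
      ∑ j ∈ Finset.range (f.natDegree + 1), if i < j then 0 else C (f.coeff j) * X ^ j := by
    rw [h, sub_eq_iff_eq_add, ← Finset.sum_add_distrib]
    refine f.as_sum_range_C_mul_X_pow.trans (Finset.sum_congr rfl fun l _ => ?_)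
    split_ifs <;> simp
  rw [h', finsetSum_coeff]
  refine Finset.sum_eq_zero fun l _ => ?_
  split_ifs with hl
  · simp
  · rw [coeff_C_mul_X_pow, if_neg (by omega)]

open Polynomial in
theorem auxB_sum {k : Type*} [CommRing k] (f : k[X]) :
    ∑ i ∈ Finset.range f.natDegree, X ^ i * auxB f i = derivative f := by
  conv_rhs => rw [f.as_sum_range_C_mul_X_pow]
  simp only [auxB, Finset.mul_sum, derivative_sum]
  rw [Finset.sum_comm]
  refine Finset.sum_congr rfl fun j hj => ?_
  rw [Finset.mem_range] at hj
  have h : ∀ i ∈ Finset.range f.natDegree,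
      (X ^ i * (if i < j then C (f.coeff j) * X ^ (j - 1 - i) else 0) : k[X]) =
      if i < j then C (f.coeff j) * X ^ (j - 1) else 0 := by
    intro i _
    split_ifs with hl
    · rw [mul_left_comm, ← pow_add]
      congr 2
      omega
    · simp
  rw [Finset.sum_congr rfl h, ← Finset.sum_filter, Finset.sum_const]
  have h2 : (Finset.range f.natDegree).filter (fun i => i < j) = Finset.range j := by
    ext i; simp only [Finset.mem_filter, Finset.mem_range]; omega
  rw [h2, Finset.card_range, derivative_C_mul_X_pow, nsmul_eq_mul, C_mul]
  simp only [map_natCast]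
  ring

open Polynomial in
theorem aux_key {k : Type*} [CommRing k] (f r : k[X]) (I : LaurentSeries k)
    (hI : AuxV f.natDegree I)
    (hFI : aeval (HahnSeries.single (-1 : ℤ) (1 : k) : LaurentSeries k) f * I = 1)
    (hr : ∀ j : ℕ, f.natDegree ≤ j → r.coeff j = 0) (i : ℕ) :
    (aeval (HahnSeries.single (-1 : ℤ) (1 : k) : LaurentSeries k) r *
      aeval (HahnSeries.single (-1 : ℤ) (1 : k) : LaurentSeries k) (auxB f i) * I).coeff 1 =
    r.coeff i := by
  have hC := AuxV.poly (f - X ^ (i + 1) * auxB f i) (i : ℤ)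
    (fun j hj => auxB_coeff f i j (by omega))
  have hR := AuxV.poly r ((f.natDegree : ℤ) - 1) (fun j hj => hr j (by omega))
  have hx : (HahnSeries.single ((i + 1 : ℕ) : ℤ) (1 : k) : LaurentSeries k) *
      (HahnSeries.single (-1 : ℤ) (1 : k)) ^ (i + 1) = 1 := by
    rw [HahnSeries.single_pow, HahnSeries.single_mul_single]; simp
  have hV := (AuxV.single (k := k) ((i + 1 : ℕ) : ℤ)).mul ((hR.mul hC).mul hI)
  have e : aeval (HahnSeries.single (-1 : ℤ) (1 : k) : LaurentSeries k) r *
      aeval (HahnSeries.single (-1 : ℤ) (1 : k) : LaurentSeries k) (auxB f i) * I =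
      HahnSeries.single ((i + 1 : ℕ) : ℤ) (1 : k) *
        aeval (HahnSeries.single (-1 : ℤ) (1 : k) : LaurentSeries k) r -
      HahnSeries.single ((i + 1 : ℕ) : ℤ) (1 : k) *
        (aeval (HahnSeries.single (-1 : ℤ) (1 : k) : LaurentSeries k) r *
        aeval (HahnSeries.single (-1 : ℤ) (1 : k) : LaurentSeries k)
          (f - X ^ (i + 1) * auxB f i) * I) := by
    rw [map_sub, map_mul, map_pow, aeval_X]
    generalize aeval (HahnSeries.single (-1 : ℤ) (1 : k) : LaurentSeries k) r = R at *
    generalize aeval (HahnSeries.single (-1 : ℤ) (1 : k) : LaurentSeries k) (auxB f i) = B at *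
    generalize aeval (HahnSeries.single (-1 : ℤ) (1 : k) : LaurentSeries k) f = F at *
    generalize (HahnSeries.single (-1 : ℤ) (1 : k) : LaurentSeries k) ^ (i + 1) = x at *
    generalize (HahnSeries.single ((i + 1 : ℕ) : ℤ) (1 : k) : LaurentSeries k) = y at *
    linear_combination (y * R) * hFI - R * B * I * hx
  rw [e, HahnSeries.coeff_sub, hV 1 (by push_cast; omega), sub_zero]
  have := HahnSeries.coeff_single_mul_add (r := (1 : k)) (b := ((i + 1 : ℕ) : ℤ)) (a := -(i : ℤ))
    (x := aeval (HahnSeries.single (-1 : ℤ) (1 : k) : LaurentSeries k) r)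
  rw [show (-(i : ℤ) + ((i + 1 : ℕ) : ℤ)) = 1 by push_cast; ring] at this
  rw [this, aux_coeff_s16]
  simp

open Polynomial in
theorem aux_trace {k : Type*} [CommRing k] (f g : k[X]) (hf : f.Monic) :
    LinearMap.trace k (Polynomial k ⧸ Ideal.span {f})
          (LinearMap.mulLeft k (Ideal.Quotient.mk (Ideal.span {f}) g)) =
      ∑ i ∈ Finset.range f.natDegree, ((g * X ^ i) %ₘ f).coeff i := by
  have h := LinearMap.trace_eq_matrix_trace k (AdjoinRoot.powerBasisAux' hf)
    (LinearMap.mulLeft k (AdjoinRoot.mk f g))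
  refine h.trans ?_
  rw [Matrix.trace, Finset.sum_range]
  refine Finset.sum_congr rfl fun i _ => ?_
  rw [Matrix.diag_apply, LinearMap.toMatrix_apply, LinearMap.mulLeft_apply,
    AdjoinRoot.powerBasisAux'_repr_apply_to_fun]
  have : AdjoinRoot.powerBasisAux' hf i = AdjoinRoot.mk f (X ^ (i : ℕ)) := by
    have := (AdjoinRoot.powerBasis' hf).basis_eq_pow i
    rw [map_pow, AdjoinRoot.mk_X]
    exact this
  rw [this, ← map_mul, AdjoinRoot.modByMonicHom_mk]

open Polynomial in
theorem aux_main {k : Type*} [CommRing k] (f g : k[X]) (hf : f.Monic) (I : LaurentSeries k)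
    (hI : AuxV f.natDegree I)
    (hFI : aeval (HahnSeries.single (-1 : ℤ) (1 : k) : LaurentSeries k) f * I = 1) :
    (aeval (HahnSeries.single (-1 : ℤ) (1 : k) : LaurentSeries k) g *
      aeval (HahnSeries.single (-1 : ℤ) (1 : k) : LaurentSeries k) (derivative f) * I).coeff 1 =
    LinearMap.trace k (Polynomial k ⧸ Ideal.span {f})
          (LinearMap.mulLeft k (Ideal.Quotient.mk (Ideal.span {f}) g)) := by
  rw [aux_trace f g hf, ← auxB_sum, map_sum, Finset.mul_sum, Finset.sum_mul,
    HahnSeries.coeff_sum]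
  refine Finset.sum_congr rfl fun i _ => ?_
  rw [← aux_key f ((g * X ^ i) %ₘ f) I hI hFI]
  · have h := congrArg (aeval (HahnSeries.single (-1 : ℤ) (1 : k) : LaurentSeries k))
      (modByMonic_add_div (g * X ^ i) f)
    have h0 : (aeval (HahnSeries.single (-1 : ℤ) (1 : k) : LaurentSeries k)
        (((g * X ^ i) /ₘ f) * auxB f i)).coeff 1 = 0 := by
      rw [aux_coeff_s16, if_neg (by norm_num)]
    conv_rhs => rw [← add_zero (HahnSeries.coeff (_ * _ * I) _), ← h0, ← HahnSeries.coeff_add]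
    congr 1
    simp only [map_add, map_mul, map_pow] at h ⊢
    linear_combination (-(aeval (HahnSeries.single (-1 : ℤ) (1 : k) : LaurentSeries k)
      (auxB f i)) * I) * h + aeval (HahnSeries.single (-1 : ℤ) (1 : k) : LaurentSeries k)
      ((g * X ^ i) /ₘ f) * aeval (HahnSeries.single (-1 : ℤ) (1 : k) : LaurentSeries k)
      (auxB f i) * hFI
  · intro j hj
    nontriviality k
    exact coeff_eq_zero_of_degree_lt ((degree_modByMonic_lt _ hf).trans_le
      (degree_le_natDegree.trans (by exact_mod_cast hj)))

/-- Let `f ∈ k[x]` be monic of degree `n ≥ 1` and let `g ∈ k[x]`.  Then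
`f(t⁻¹)` is a unit of the Laurent series ring `k((t))`, the coefficient of `t^1` in
`g(t⁻¹)·f'(t⁻¹)·f(t⁻¹)⁻¹` equals the trace of the `k`-linear endomorphism "multiplication by
the image of `g`" of the finite free `k`-algebra `k[x]/(f)`, i.e.
`res((g/f) df) = trace_{(k[x]/(f))/k}(g)`; and in particular (taking `g = 1`)
`res(f'(x) dx / f(x)) = n`. -/
theorem stmt16 (k : Type*) [CommRing k] (f g : Polynomial k)
    (hf : f.Monic) (hn : 1 ≤ f.natDegree) :
    IsUnit (Polynomial.aeval (HahnSeries.single (-1 : ℤ) (1 : k) : LaurentSeries k) f) ∧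
      ((Polynomial.aeval (HahnSeries.single (-1 : ℤ) (1 : k) : LaurentSeries k) g) *
            (Polynomial.aeval (HahnSeries.single (-1 : ℤ) (1 : k) : LaurentSeries k)
              (Polynomial.derivative f)) *
          Ring.inverse
            (Polynomial.aeval (HahnSeries.single (-1 : ℤ) (1 : k) : LaurentSeries k) f)).coeff
          (1 : ℤ) =
        LinearMap.trace k (Polynomial k ⧸ Ideal.span {f})
          (LinearMap.mulLeft k (Ideal.Quotient.mk (Ideal.span {f}) g)) ∧
      ((Polynomial.aeval (HahnSeries.single (-1 : ℤ) (1 : k) : LaurentSeries k)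
              (Polynomial.derivative f)) *
          Ring.inverse
            (Polynomial.aeval (HahnSeries.single (-1 : ℤ) (1 : k) : LaurentSeries k) f)).coeff
          (1 : ℤ) =
        (f.natDegree : k) := by
  obtain ⟨I, hI, hFI⟩ := aux_unit f hf
  have hu := IsUnit.of_mul_eq_one I hFI
  have hinv : Ring.inverse
      (Polynomial.aeval (HahnSeries.single (-1 : ℤ) (1 : k) : LaurentSeries k) f) = I := by
    rw [← mul_one (Ring.inverse _), ← hFI, ← mul_assoc, Ring.inverse_mul_cancel _ hu, one_mul]
  refine ⟨hu, ?_, ?_⟩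
  · rw [hinv]
    exact aux_main f g hf I hI hFI
  · rw [hinv]
    have h := aux_main f 1 hf I hI hFI
    rw [map_one, one_mul] at h
    rw [h, aux_trace f 1 hf]
    nontriviality k
    rw [Finset.sum_congr rfl (g := fun _ => (1 : k))]
    · simp
    · intro i hi
      rw [Finset.mem_range] at hi
      rw [one_mul, (Polynomial.modByMonic_eq_self_iff hf).2]
      · simp
      · rw [Polynomial.degree_X_pow, Polynomial.degree_eq_natDegree hf.ne_zero]
        exact_mod_cast hi
end
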